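/- Let (η, ϕ) be a smooth solution of the three-dimensional water-wave system on [0,T], with (conserved) energy 𝓗 := 𝓗(0). Assume η(t,x) ≥ −4h/9 for all (t,x), and that there exist positive constants A, B such that B < 2/9, T ≥ (4/(2 − 9B))·(1 + 7·max{L₁,L₂}·A/√g), sup_{t∈[0,T]} ‖∇η(t,·)‖_{L^∞(Q)} ≤ B and sup_{t∈[0,T]} ‖∇ψ(t,·)‖_{L²(Q)} ≤ A·√(2𝓗). Then 𝓑(T) ≥ 𝓗. -/

import Mathlib

open Real Set MeasureTheory

noncomputable section

/-- `∂_{x₁}ϕ(t,x₁,x₂,y)` -/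
def phiX1 (ϕ : ℝ → ℝ → ℝ → ℝ → ℝ) (t x₁ x₂ y : ℝ) : ℝ := deriv (fun s => ϕ t s x₂ y) x₁

/-- `∂_{x₂}ϕ(t,x₁,x₂,y)` -/
def phiX2 (ϕ : ℝ → ℝ → ℝ → ℝ → ℝ) (t x₁ x₂ y : ℝ) : ℝ := deriv (fun s => ϕ t x₁ s y) x₂

/-- `∂_yϕ(t,x₁,x₂,y)` -/
def phiY3 (ϕ : ℝ → ℝ → ℝ → ℝ → ℝ) (t x₁ x₂ y : ℝ) : ℝ := deriv (fun s => ϕ t x₁ x₂ s) y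

/-- `∂ₜϕ(t,x₁,x₂,y)` -/
def phiT3 (ϕ : ℝ → ℝ → ℝ → ℝ → ℝ) (t x₁ x₂ y : ℝ) : ℝ := deriv (fun s => ϕ s x₁ x₂ y) t

/-- `|∇_{x,y}ϕ|²(t,x₁,x₂,y)` -/
def gradSq3 (ϕ : ℝ → ℝ → ℝ → ℝ → ℝ) (t x₁ x₂ y : ℝ) : ℝ :=
  (phiX1 ϕ t x₁ x₂ y) ^ 2 + (phiX2 ϕ t x₁ x₂ y) ^ 2 + (phiY3 ϕ t x₁ x₂ y) ^ 2

/-- `|∇ₓϕ|²(t,x₁,x₂,y)` (horizontal gradient) -/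
def gradXSq3 (ϕ : ℝ → ℝ → ℝ → ℝ → ℝ) (t x₁ x₂ y : ℝ) : ℝ :=
  (phiX1 ϕ t x₁ x₂ y) ^ 2 + (phiX2 ϕ t x₁ x₂ y) ^ 2

/-- `∂_{x₁}η(t,x₁,x₂)` -/
def etaX1 (η : ℝ → ℝ → ℝ → ℝ) (t x₁ x₂ : ℝ) : ℝ := deriv (fun s => η t s x₂) x₁

/-- `∂_{x₂}η(t,x₁,x₂)` -/
def etaX2 (η : ℝ → ℝ → ℝ → ℝ) (t x₁ x₂ : ℝ) : ℝ := deriv (fun s => η t x₁ s) x₂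

/-- `∂ₜη(t,x₁,x₂)` -/
def etaT3 (η : ℝ → ℝ → ℝ → ℝ) (t x₁ x₂ : ℝ) : ℝ := deriv (fun s => η s x₁ x₂) t

/-- the trace `ψ(t,x) = ϕ(t,x,η(t,x))` -/
def psi3 (η : ℝ → ℝ → ℝ → ℝ) (ϕ : ℝ → ℝ → ℝ → ℝ → ℝ) (t x₁ x₂ : ℝ) : ℝ :=
  ϕ t x₁ x₂ (η t x₁ x₂)

/-- `∂ₜψ(t,x₁,x₂)` -/
def psi3T (η : ℝ → ℝ → ℝ → ℝ) (ϕ : ℝ → ℝ → ℝ → ℝ → ℝ) (t x₁ x₂ : ℝ) : ℝ :=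
  deriv (fun s => psi3 η ϕ s x₁ x₂) t

/-- `∂_{x₁}ψ(t,x₁,x₂)` -/
def psi3X1 (η : ℝ → ℝ → ℝ → ℝ) (ϕ : ℝ → ℝ → ℝ → ℝ → ℝ) (t x₁ x₂ : ℝ) : ℝ :=
  deriv (fun s => psi3 η ϕ t s x₂) x₁

/-- `∂_{x₂}ψ(t,x₁,x₂)` -/
def psi3X2 (η : ℝ → ℝ → ℝ → ℝ) (ϕ : ℝ → ℝ → ℝ → ℝ → ℝ) (t x₁ x₂ : ℝ) : ℝ :=
  deriv (fun s => psi3 η ϕ t x₁ s) x₂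

/-- `Θ(t,x) = -η ∂ₜψ - (g/2) η²` -/
def Theta3 (g : ℝ) (η : ℝ → ℝ → ℝ → ℝ) (ϕ : ℝ → ℝ → ℝ → ℝ → ℝ) (t x₁ x₂ : ℝ) : ℝ :=
  -(η t x₁ x₂) * psi3T η ϕ t x₁ x₂ - g / 2 * (η t x₁ x₂) ^ 2

/-- the energy `𝓗(t)` -/
def energy3D (L₁ L₂ h g : ℝ) (η : ℝ → ℝ → ℝ → ℝ) (ϕ : ℝ → ℝ → ℝ → ℝ → ℝ) (t : ℝ) : ℝ :=
  g / 2 * (∫ x₁ in (0:ℝ)..L₁, ∫ x₂ in (0:ℝ)..L₂, (η t x₁ x₂) ^ 2)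
    + 1 / 2 * ∫ x₁ in (0:ℝ)..L₁, ∫ x₂ in (0:ℝ)..L₂, ∫ y in (-h)..(η t x₁ x₂),
        gradSq3 ϕ t x₁ x₂ y

/-- the boundary observation `𝓑(T)` -/
def bigB (L₁ L₂ g T : ℝ) (η : ℝ → ℝ → ℝ → ℝ) (ϕ : ℝ → ℝ → ℝ → ℝ → ℝ) : ℝ :=
  ∫ t in (0:ℝ)..T,
    (L₁ * (∫ x₂ in (0:ℝ)..L₂, Theta3 g η ϕ t L₁ x₂)
      + L₂ * ∫ x₁ in (0:ℝ)..L₁, Theta3 g η ϕ t x₁ L₂)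

/-- the positive boundary term `P` -/
def bigP (L₁ L₂ h T : ℝ) (η : ℝ → ℝ → ℝ → ℝ) (ϕ : ℝ → ℝ → ℝ → ℝ → ℝ) : ℝ :=
  1 / 2 * ∫ t in (0:ℝ)..T,
    (L₁ * (∫ x₂ in (0:ℝ)..L₂, ∫ y in (-h)..(η t L₁ x₂), gradSq3 ϕ t L₁ x₂ y)
      + L₂ * (∫ x₁ in (0:ℝ)..L₁, ∫ y in (-h)..(η t x₁ L₂), gradSq3 ϕ t x₁ L₂ y)
      + h * ∫ x₁ in (0:ℝ)..L₁, ∫ x₂ in (0:ℝ)..L₂, gradSq3 ϕ t x₁ x₂ (-h))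

/-- A smooth solution of the three-dimensional water-wave system on `[0,T]`,
in the tank over `Q = [0,L₁] × [0,L₂]`. -/
structure IsWW3D (L₁ L₂ h g T : ℝ) (η : ℝ → ℝ → ℝ → ℝ)
    (ϕ : ℝ → ℝ → ℝ → ℝ → ℝ) : Prop where
  smooth_eta : ContDiff ℝ (⊤ : ℕ∞) (fun p : ℝ × ℝ × ℝ => η p.1 p.2.1 p.2.2)
  smooth_phi : ContDiff ℝ (⊤ : ℕ∞) (fun p : ℝ × ℝ × ℝ × ℝ => ϕ p.1 p.2.1 p.2.2.1 p.2.2.2)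
  eta_lower : ∀ t ∈ Icc (0:ℝ) T, ∀ x₁ ∈ Icc (0:ℝ) L₁, ∀ x₂ ∈ Icc (0:ℝ) L₂,
    -h / 2 ≤ η t x₁ x₂
  eta_mean : ∀ t ∈ Icc (0:ℝ) T,
    (∫ x₁ in (0:ℝ)..L₁, ∫ x₂ in (0:ℝ)..L₂, η t x₁ x₂) = 0
  laplace : ∀ t ∈ Icc (0:ℝ) T, ∀ x₁ ∈ Icc (0:ℝ) L₁, ∀ x₂ ∈ Icc (0:ℝ) L₂,
    ∀ y ∈ Icc (-h) (η t x₁ x₂),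
      deriv (fun s => phiX1 ϕ t s x₂ y) x₁ + deriv (fun s => phiX2 ϕ t x₁ s y) x₂
        + deriv (fun s => phiY3 ϕ t x₁ x₂ s) y = 0
  bc_x1 : ∀ t ∈ Icc (0:ℝ) T, ∀ x₁ ∈ ({0, L₁} : Set ℝ), ∀ x₂ ∈ Icc (0:ℝ) L₂,
    ∀ y ∈ Icc (-h) (η t x₁ x₂), phiX1 ϕ t x₁ x₂ y = 0
  bc_x2 : ∀ t ∈ Icc (0:ℝ) T, ∀ x₂ ∈ ({0, L₂} : Set ℝ), ∀ x₁ ∈ Icc (0:ℝ) L₁,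
    ∀ y ∈ Icc (-h) (η t x₁ x₂), phiX2 ϕ t x₁ x₂ y = 0
  bc_bottom : ∀ t ∈ Icc (0:ℝ) T, ∀ x₁ ∈ Icc (0:ℝ) L₁, ∀ x₂ ∈ Icc (0:ℝ) L₂,
    phiY3 ϕ t x₁ x₂ (-h) = 0
  kinematic : ∀ t ∈ Icc (0:ℝ) T, ∀ x₁ ∈ Icc (0:ℝ) L₁, ∀ x₂ ∈ Icc (0:ℝ) L₂,
    etaT3 η t x₁ x₂
      = phiY3 ϕ t x₁ x₂ (η t x₁ x₂)
        - (etaX1 η t x₁ x₂ * phiX1 ϕ t x₁ x₂ (η t x₁ x₂)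
            + etaX2 η t x₁ x₂ * phiX2 ϕ t x₁ x₂ (η t x₁ x₂))
  bernoulli : ∀ t ∈ Icc (0:ℝ) T, ∀ x₁ ∈ Icc (0:ℝ) L₁, ∀ x₂ ∈ Icc (0:ℝ) L₂,
    phiT3 ϕ t x₁ x₂ (η t x₁ x₂)
      + 1 / 2 * ((phiX1 ϕ t x₁ x₂ (η t x₁ x₂)) ^ 2
          + (phiX2 ϕ t x₁ x₂ (η t x₁ x₂)) ^ 2 + (phiY3 ϕ t x₁ x₂ (η t x₁ x₂)) ^ 2)
      + g * η t x₁ x₂ = 0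
  etaX1_bc : ∀ t ∈ Icc (0:ℝ) T, ∀ x₁ ∈ ({0, L₁} : Set ℝ), ∀ x₂ ∈ Icc (0:ℝ) L₂,
    etaX1 η t x₁ x₂ = 0
  etaX2_bc : ∀ t ∈ Icc (0:ℝ) T, ∀ x₂ ∈ ({0, L₂} : Set ℝ), ∀ x₁ ∈ Icc (0:ℝ) L₁,
    etaX2 η t x₁ x₂ = 0

/-!
The proof is a multiplier argument. Write `K = ∬ η (x · ∇ψ + ¾ ψ)`, `X = (x₁, x₂, y - (9/4) η)`, and
let `S` be the flux through the surface of the Rellich field `(X · ∇ϕ) ∇ϕ - ½ |∇ϕ|² X`. The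
divergence theorem on the rectangle turns the boundary integrals of `Θ` into double integrals, and
the kinematic and Bernoulli conditions then give

  `(boundary integrals of Θ) + dK/dt = (g/4) ∬ η² + (3/4) ∭ |∇ϕ|² + S`.

The constant `9/4 = 1 + 5/4` is dictated by the term `-(5/4) η ∂ₜψ` that is left on the surface.

As `ϕ` is harmonic, the divergence of the Rellich field is `-½ |∇ϕ|² - (9/4) (∇η · ∇ₓϕ) ∂_yϕ`, at
least `-½ (1 + (9/4) B) |∇ϕ|²`. Its fluxes through walls and bottom have a favourable sign because
`X` does not point into the fluid there; at the bottom this is the condition `η ≥ -4h/9`. Hence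
the right-hand side is at least `((2 - 9B)/4) 𝓗`.

Energy conservation allows one to integrate this bound in time. Finally, at both end points,
`|K| ≤ (7/2) max L₁ L₂ A 𝓗 / √g`: since `η` has mean zero, the mean of `ψ` may be subtracted in `K`,
and the Cauchy–Schwarz and Poincaré inequalities apply.
-/

/-! ### Partial derivatives and integrals depending on parameters -/

/-- `∂f/∂x` for a function `f` of two real variables `(x, y)`. -/
def pderivFst (f : ℝ → ℝ → ℝ) (x y : ℝ) : ℝ := deriv (fun s => f s y) x

/-- `∂f/∂y` for a function `f` of two real variables `(x, y)`. -/
def pderivSnd (f : ℝ → ℝ → ℝ) (x y : ℝ) : ℝ := deriv (fun s => f x s) y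

/-- `∂f/∂x` for a function `f` of three real variables `(x, y, z)`. -/
def pderiv₁ (f : ℝ → ℝ → ℝ → ℝ) (x y z : ℝ) : ℝ := deriv (fun s => f s y z) x

/-- `∂f/∂y` for a function `f` of three real variables `(x, y, z)`. -/
def pderiv₂ (f : ℝ → ℝ → ℝ → ℝ) (x y z : ℝ) : ℝ := deriv (fun s => f x s z) y

/-- `∂f/∂z` for a function `f` of three real variables `(x, y, z)`. -/
def pderiv₃ (f : ℝ → ℝ → ℝ → ℝ) (x y z : ℝ) : ℝ := deriv (fun s => f x y s) z

theorem contDiff_deriv_of_uncurry {E : Type*} [NormedAddCommGroup E] [NormedSpace ℝ E]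
    {m n : WithTop ℕ∞} {f : E → ℝ → ℝ} {g : E → ℝ} (hf : ContDiff ℝ n (Function.uncurry f))
    (hg : ContDiff ℝ m g) (hmn : m + 1 ≤ n) : ContDiff ℝ m fun x => deriv (f x) (g x) :=
  (hf.fderiv hg hmn).clm_apply contDiff_const

section Slices

variable {E : Type*} [NormedAddCommGroup E] [NormedSpace ℝ E] {F : ℝ × ℝ → E}

theorem hasDerivAt_prodMk_left (hF : Differentiable ℝ F) (x y : ℝ) :
    HasDerivAt (fun s => F (s, y)) (fderiv ℝ F (x, y) (1, 0)) x :=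
  (hF (x, y)).hasFDerivAt.comp_hasDerivAt x ((hasDerivAt_id x).prodMk (hasDerivAt_const x y))

theorem hasDerivAt_prodMk_right (hF : Differentiable ℝ F) (x y : ℝ) :
    HasDerivAt (fun s => F (x, s)) (fderiv ℝ F (x, y) (0, 1)) y :=
  (hF (x, y)).hasFDerivAt.comp_hasDerivAt y ((hasDerivAt_const y x).prodMk (hasDerivAt_id y))

theorem deriv_deriv_comm (hF : ContDiff ℝ 2 F) (x y : ℝ) :
    deriv (fun s => deriv (fun r => F (s, r)) y) x =
      deriv (fun r => deriv (fun s => F (s, r)) x) y := by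
  have hd : Differentiable ℝ F := hF.differentiable (by norm_num)
  have hd₂ : Differentiable ℝ (fderiv ℝ F) :=
    (hF.fderiv_right (m := 1) (by norm_num)).differentiable (by norm_num)
  simp only [(hasDerivAt_prodMk_left hd _ _).deriv, (hasDerivAt_prodMk_right hd _ _).deriv]
  rw [((hasDerivAt_prodMk_left hd₂ x y).clm_apply (hasDerivAt_const x _)).deriv,
    ((hasDerivAt_prodMk_right hd₂ x y).clm_apply (hasDerivAt_const y _)).deriv]
  simpa using (hF.contDiffAt.isSymmSndFDerivAt (by simp)) (1, 0) (0, 1)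

end Slices

section PartialDerivatives

variable {f : ℝ → ℝ → ℝ} {φ : ℝ → ℝ → ℝ → ℝ} {m n : WithTop ℕ∞}

theorem contDiff_pderivFst (hf : ContDiff ℝ n ↿f) (hmn : m + 1 ≤ n) :
    ContDiff ℝ m ↿(pderivFst f) :=
  contDiff_deriv_of_uncurry (f := fun (p : ℝ × ℝ) s => f s p.2) (by fun_prop) contDiff_fst hmn

theorem contDiff_pderivSnd (hf : ContDiff ℝ n ↿f) (hmn : m + 1 ≤ n) :
    ContDiff ℝ m ↿(pderivSnd f) :=
  contDiff_deriv_of_uncurry (f := fun (p : ℝ × ℝ) s => f p.1 s) (by fun_prop) contDiff_snd hmn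

theorem contDiff_pderiv₁ (hφ : ContDiff ℝ n ↿φ) (hmn : m + 1 ≤ n) : ContDiff ℝ m ↿(pderiv₁ φ) :=
  contDiff_deriv_of_uncurry (f := fun (p : ℝ × ℝ × ℝ) s => φ s p.2.1 p.2.2) (by fun_prop)
    contDiff_fst hmn

theorem contDiff_pderiv₂ (hφ : ContDiff ℝ n ↿φ) (hmn : m + 1 ≤ n) : ContDiff ℝ m ↿(pderiv₂ φ) :=
  contDiff_deriv_of_uncurry (f := fun (p : ℝ × ℝ × ℝ) s => φ p.1 s p.2.2) (by fun_prop)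
    contDiff_snd.fst hmn

theorem contDiff_pderiv₃ (hφ : ContDiff ℝ n ↿φ) (hmn : m + 1 ≤ n) : ContDiff ℝ m ↿(pderiv₃ φ) :=
  contDiff_deriv_of_uncurry (f := fun (p : ℝ × ℝ × ℝ) s => φ p.1 p.2.1 s) (by fun_prop)
    contDiff_snd.snd hmn

theorem continuous_pderivFst (hf : ContDiff ℝ 1 ↿f) : Continuous ↿(pderivFst f) :=
  (contDiff_pderivFst (m := 0) hf (by simp)).continuous

theorem continuous_pderivSnd (hf : ContDiff ℝ 1 ↿f) : Continuous ↿(pderivSnd f) :=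
  (contDiff_pderivSnd (m := 0) hf (by simp)).continuous

theorem continuous_pderiv₁ (hφ : ContDiff ℝ 1 ↿φ) : Continuous ↿(pderiv₁ φ) :=
  (contDiff_pderiv₁ (m := 0) hφ (by simp)).continuous

theorem continuous_pderiv₂ (hφ : ContDiff ℝ 1 ↿φ) : Continuous ↿(pderiv₂ φ) :=
  (contDiff_pderiv₂ (m := 0) hφ (by simp)).continuous

theorem continuous_pderiv₃ (hφ : ContDiff ℝ 1 ↿φ) : Continuous ↿(pderiv₃ φ) :=
  (contDiff_pderiv₃ (m := 0) hφ (by simp)).continuous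

theorem hasDerivAt_pderivFst (hf : ContDiff ℝ 1 ↿f) (x y : ℝ) :
    HasDerivAt (fun s => f s y) (pderivFst f x y) x :=
  have hs : ContDiff ℝ 1 fun s => f s y := by fun_prop
  (hs.differentiable one_ne_zero x).hasDerivAt

theorem hasDerivAt_pderivSnd (hf : ContDiff ℝ 1 ↿f) (x y : ℝ) :
    HasDerivAt (fun s => f x s) (pderivSnd f x y) y :=
  have hs : ContDiff ℝ 1 fun s => f x s := by fun_prop
  (hs.differentiable one_ne_zero y).hasDerivAt

theorem hasDerivAt_pderiv₁ (hφ : ContDiff ℝ 1 ↿φ) (x y z : ℝ) :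
    HasDerivAt (fun s => φ s y z) (pderiv₁ φ x y z) x :=
  have hs : ContDiff ℝ 1 fun s => φ s y z := by fun_prop
  (hs.differentiable one_ne_zero x).hasDerivAt

theorem hasDerivAt_pderiv₂ (hφ : ContDiff ℝ 1 ↿φ) (x y z : ℝ) :
    HasDerivAt (fun s => φ x s z) (pderiv₂ φ x y z) y :=
  have hs : ContDiff ℝ 1 fun s => φ x s z := by fun_prop
  (hs.differentiable one_ne_zero y).hasDerivAt

theorem hasDerivAt_pderiv₃ (hφ : ContDiff ℝ 1 ↿φ) (x y z : ℝ) :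
    HasDerivAt (fun s => φ x y s) (pderiv₃ φ x y z) z :=
  have hs : ContDiff ℝ 1 fun s => φ x y s := by fun_prop
  (hs.differentiable one_ne_zero z).hasDerivAt

theorem pderiv₁_pderiv₂ (hφ : ContDiff ℝ 2 ↿φ) (x y z : ℝ) :
    pderiv₁ (pderiv₂ φ) x y z = pderiv₂ (pderiv₁ φ) x y z :=
  deriv_deriv_comm (F := fun p => φ p.1 p.2 z) (by fun_prop) x y

theorem pderiv₁_pderiv₃ (hφ : ContDiff ℝ 2 ↿φ) (x y z : ℝ) :
    pderiv₁ (pderiv₃ φ) x y z = pderiv₃ (pderiv₁ φ) x y z :=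
  deriv_deriv_comm (F := fun p => φ p.1 y p.2) (by fun_prop) x z

theorem pderiv₂_pderiv₃ (hφ : ContDiff ℝ 2 ↿φ) (x y z : ℝ) :
    pderiv₂ (pderiv₃ φ) x y z = pderiv₃ (pderiv₂ φ) x y z :=
  deriv_deriv_comm (F := fun p => φ x p.1 p.2) (by fun_prop) y z

end PartialDerivatives

theorem hasDerivAt_integral_of_continuous {f f' : ℝ → ℝ → ℝ} (hf : Continuous ↿f)
    (hf' : Continuous ↿f') (hd : ∀ s y, HasDerivAt (fun r => f r y) (f' s y) s) (a b s : ℝ) :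
    HasDerivAt (fun r => ∫ y in a..b, f r y) (∫ y in a..b, f' s y) s := by
  have hK : IsCompact (Icc (s - 1) (s + 1) ×ˢ uIcc a b) := isCompact_Icc.prod isCompact_uIcc
  obtain ⟨C, hC⟩ := hK.exists_bound_of_continuousOn hf'.continuousOn
  refine (intervalIntegral.hasDerivAt_integral_of_dominated_loc_of_deriv_le (F' := f')
    (bound := fun _ => C) (s := Icc (s - 1) (s + 1)) (Icc_mem_nhds (by linarith) (by linarith))
    (.of_forall fun r => ?_) (Continuous.intervalIntegrable (by fun_prop) _ _) ?_
    (.of_forall fun y hy r hr => hC (r, y) ⟨hr, uIoc_subset_uIcc hy⟩) intervalIntegrable_const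
    (.of_forall fun y _ r _ => hd r y)).2
  · exact Continuous.aestronglyMeasurable (by fun_prop)
  · exact Continuous.aestronglyMeasurable (by fun_prop)

theorem hasDerivAt_integral_of_contDiff {f : ℝ → ℝ → ℝ} (hf : ContDiff ℝ 1 ↿f) {b : ℝ → ℝ}
    {b' s : ℝ} (hb : HasDerivAt b b' s) (a : ℝ) :
    HasDerivAt (fun r => ∫ y in a..b r, f r y)
      ((∫ y in a..b s, pderivFst f s y) + f s (b s) * b') s := by
  have hf' : Continuous ↿(pderivFst f) := continuous_pderivFst hf
  have hf₀ : Continuous ↿f := hf.continuous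
  have lift : Continuous fun c : ℝ => ContinuousLinearMap.toSpanSingleton ℝ c :=
    (ContinuousLinearMap.toSpanSingletonCLE (𝕜 := ℝ) (E := ℝ)).continuous
  have key := hasStrictFDerivAt_uncurry_coprod (𝕜 := ℝ) (u := (s, b s))
    (f := fun r t => ∫ y in a..t, f r y)
    (f₁ := fun r t => ContinuousLinearMap.toSpanSingleton ℝ (∫ y in a..t, pderivFst f r y))
    (f₂ := fun r t => ContinuousLinearMap.toSpanSingleton ℝ (f r t))
    (.of_forall fun v => (hasDerivAt_integral_of_continuous hf₀ hf'
      (hasDerivAt_pderivFst hf) a v.2 v.1).hasFDerivAt)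
    (.of_forall fun v => by
      have hc : Continuous (f v.1) := by fun_prop
      exact (hc.integral_hasStrictDerivAt a v.2).hasDerivAt.hasFDerivAt)
    (lift.comp (show Continuous fun v : ℝ × ℝ => ∫ y in a..v.2, pderivFst f v.1 y by
      fun_prop)).continuousAt
    (lift.comp hf₀).continuousAt
  have hc : HasDerivAt (fun r => (r, b r)) (1, b') s := (hasDerivAt_id s).prodMk hb
  refine (key.hasFDerivAt.comp_hasDerivAt s hc).congr_deriv ?_
  simp [Function.HasUncurry.uncurry, mul_comm]

section IteratedIntegrals

variable {f f' : ℝ → ℝ → ℝ} {a b c d : ℝ}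

theorem integral₂_comm (hf : Continuous ↿f) (a b c d : ℝ) :
    ∫ x in a..b, ∫ y in c..d, f x y = ∫ y in c..d, ∫ x in a..b, f x y :=
  intervalIntegral_intervalIntegral_swap <|
    ((hf.continuousOn.integrableOn_compact (isCompact_uIcc.prod isCompact_uIcc)).mono_set
      (prod_mono uIoc_subset_uIcc uIoc_subset_uIcc))

theorem integral₂_add {g : ℝ → ℝ → ℝ} (hf : Continuous ↿f) (hg : Continuous ↿g)
    (a b c d : ℝ) :
    ∫ x in a..b, ∫ y in c..d, (f x y + g x y) =
      (∫ x in a..b, ∫ y in c..d, f x y) + ∫ x in a..b, ∫ y in c..d, g x y := by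
  rw [← intervalIntegral.integral_add (Continuous.intervalIntegrable (by fun_prop) _ _)
    (Continuous.intervalIntegrable (by fun_prop) _ _)]
  congr! 2 with x
  exact intervalIntegral.integral_add (Continuous.intervalIntegrable (by fun_prop) _ _)
    (Continuous.intervalIntegrable (by fun_prop) _ _)

theorem integral₂_sub {g : ℝ → ℝ → ℝ} (hf : Continuous ↿f) (hg : Continuous ↿g)
    (a b c d : ℝ) :
    ∫ x in a..b, ∫ y in c..d, (f x y - g x y) =
      (∫ x in a..b, ∫ y in c..d, f x y) - ∫ x in a..b, ∫ y in c..d, g x y := by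
  rw [← intervalIntegral.integral_sub (Continuous.intervalIntegrable (by fun_prop) _ _)
    (Continuous.intervalIntegrable (by fun_prop) _ _)]
  congr! 2 with x
  exact intervalIntegral.integral_sub (Continuous.intervalIntegrable (by fun_prop) _ _)
    (Continuous.intervalIntegrable (by fun_prop) _ _)

theorem integral₂_mono_on {g : ℝ → ℝ → ℝ} (hab : a ≤ b) (hcd : c ≤ d)
    (hf : Continuous ↿f) (hg : Continuous ↿g)
    (h : ∀ x ∈ Icc a b, ∀ y ∈ Icc c d, f x y ≤ g x y) :
    ∫ x in a..b, ∫ y in c..d, f x y ≤ ∫ x in a..b, ∫ y in c..d, g x y :=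
  intervalIntegral.integral_mono_on hab (Continuous.intervalIntegrable (by fun_prop) _ _)
    (Continuous.intervalIntegrable (by fun_prop) _ _) fun x hx =>
      intervalIntegral.integral_mono_on hcd (Continuous.intervalIntegrable (by fun_prop) _ _)
        (Continuous.intervalIntegrable (by fun_prop) _ _) (h x hx)

theorem integral_congr_on {f g : ℝ → ℝ} (hab : a ≤ b) (h : ∀ x ∈ Icc a b, f x = g x) :
    ∫ x in a..b, f x = ∫ x in a..b, g x :=
  intervalIntegral.integral_congr fun x hx => h x (uIcc_of_le hab ▸ hx)

theorem integral_eq_zero_on {f : ℝ → ℝ} (hab : a ≤ b) (h : ∀ x ∈ Icc a b, f x = 0) :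
    ∫ x in a..b, f x = 0 := by
  simpa using integral_congr_on (g := fun _ => 0) hab h

theorem integral₂_congr_on {g : ℝ → ℝ → ℝ} (hab : a ≤ b) (hcd : c ≤ d)
    (h : ∀ x ∈ Icc a b, ∀ y ∈ Icc c d, f x y = g x y) :
    ∫ x in a..b, ∫ y in c..d, f x y = ∫ x in a..b, ∫ y in c..d, g x y :=
  integral_congr_on hab fun x hx => integral_congr_on hcd (h x hx)

theorem integral₂_nonneg (hab : a ≤ b) (hcd : c ≤ d)
    (h : ∀ x ∈ Icc a b, ∀ y ∈ Icc c d, 0 ≤ f x y) : 0 ≤ ∫ x in a..b, ∫ y in c..d, f x y :=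
  intervalIntegral.integral_nonneg hab fun x hx => intervalIntegral.integral_nonneg hcd (h x hx)

theorem integral₂_of_hasDerivAt_left (hf' : Continuous ↿f')
    (hd : ∀ x y, HasDerivAt (fun s => f s y) (f' x y) x) (a b c d : ℝ) :
    ∫ x in a..b, ∫ y in c..d, f' x y = ∫ y in c..d, (f b y - f a y) := by
  rw [integral₂_comm hf']
  congr! 2 with y
  exact intervalIntegral.integral_eq_sub_of_hasDerivAt (fun x _ => hd x y)
    (Continuous.intervalIntegrable (by fun_prop) _ _)

theorem integral₂_of_hasDerivAt_right (hf' : Continuous ↿f')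
    (hd : ∀ x y, HasDerivAt (fun s => f x s) (f' x y) y) (a b c d : ℝ) :
    ∫ x in a..b, ∫ y in c..d, f' x y = ∫ x in a..b, (f x d - f x c) := by
  congr! 2 with x
  exact intervalIntegral.integral_eq_sub_of_hasDerivAt (fun y _ => hd x y)
    (Continuous.intervalIntegrable (by fun_prop) _ _)

theorem continuous_integral₂ {F : ℝ → ℝ → ℝ → ℝ} (hF : Continuous ↿F) (a b c d : ℝ) :
    Continuous fun s => ∫ x in a..b, ∫ y in c..d, F s x y := by
  fun_prop

theorem hasDerivAt_integral₂ {F F' : ℝ → ℝ → ℝ → ℝ} (hF : Continuous ↿F)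
    (hF' : Continuous ↿F') (hd : ∀ s x y, HasDerivAt (fun r => F r x y) (F' s x y) s)
    (a b c d s : ℝ) :
    HasDerivAt (fun r => ∫ x in a..b, ∫ y in c..d, F r x y) (∫ x in a..b, ∫ y in c..d, F' s x y)
      s :=
  hasDerivAt_integral_of_continuous (f := fun r x => ∫ y in c..d, F r x y)
    (f' := fun r x => ∫ y in c..d, F' r x y) (by fun_prop) (by fun_prop)
    (fun r x => hasDerivAt_integral_of_continuous (f := fun r y => F r x y)
      (f' := fun r y => F' r x y) (by fun_prop) (by fun_prop) (fun r y => hd r x y) c d r) a b s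

end IteratedIntegrals

/-! ### The divergence theorem under a graph -/

section Divergence

variable {e : ℝ → ℝ → ℝ} {U V W : ℝ → ℝ → ℝ → ℝ}

theorem integral_pderiv₁_under_graph (he : ContDiff ℝ 1 ↿e) (hU : ContDiff ℝ 1 ↿U)
    (a b c d z₀ : ℝ) :
    ∫ x in a..b, ∫ y in c..d, ∫ z in z₀..e x y, pderiv₁ U x y z =
      (∫ y in c..d, ((∫ z in z₀..e b y, U b y z) - ∫ z in z₀..e a y, U a y z)) -
        ∫ x in a..b, ∫ y in c..d, U x y (e x y) * pderivFst e x y := by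
  have hc : Continuous ↿(pderivFst e) := continuous_pderivFst he
  have hc₁ : Continuous ↿(pderiv₁ U) := continuous_pderiv₁ hU
  have hUe : Continuous ↿fun x y => U x y (e x y) * pderivFst e x y := by fun_prop
  have hI : Continuous ↿fun x y => ∫ z in z₀..e x y, pderiv₁ U x y z := by fun_prop
  rw [eq_sub_iff_add_eq, ← integral₂_add hI hUe]
  exact integral₂_of_hasDerivAt_left (f := fun x y => ∫ z in z₀..e x y, U x y z)
    (hI.add hUe) (fun x y => hasDerivAt_integral_of_contDiff (f := fun s z => U s y z)
      (by fun_prop) (hasDerivAt_pderivFst he x y) z₀) a b c d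

theorem integral_pderiv₂_under_graph (he : ContDiff ℝ 1 ↿e) (hV : ContDiff ℝ 1 ↿V)
    (a b c d z₀ : ℝ) :
    ∫ x in a..b, ∫ y in c..d, ∫ z in z₀..e x y, pderiv₂ V x y z =
      (∫ x in a..b, ((∫ z in z₀..e x d, V x d z) - ∫ z in z₀..e x c, V x c z)) -
        ∫ x in a..b, ∫ y in c..d, V x y (e x y) * pderivSnd e x y := by
  have hc : Continuous ↿(pderivSnd e) := continuous_pderivSnd he
  have hc₁ : Continuous ↿(pderiv₂ V) := continuous_pderiv₂ hV
  have hVe : Continuous ↿fun x y => V x y (e x y) * pderivSnd e x y := by fun_prop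
  have hI : Continuous ↿fun x y => ∫ z in z₀..e x y, pderiv₂ V x y z := by fun_prop
  rw [eq_sub_iff_add_eq, ← integral₂_add hI hVe]
  exact integral₂_of_hasDerivAt_right (f := fun x y => ∫ z in z₀..e x y, V x y z)
    (hI.add hVe) (fun x y => hasDerivAt_integral_of_contDiff (f := fun s z => V x s z)
      (by fun_prop) (hasDerivAt_pderivSnd he x y) z₀) a b c d

theorem integral_pderiv₃_under_graph (he : Continuous ↿e) (hW : ContDiff ℝ 1 ↿W)
    (a b c d z₀ : ℝ) :
    ∫ x in a..b, ∫ y in c..d, ∫ z in z₀..e x y, pderiv₃ W x y z =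
      (∫ x in a..b, ∫ y in c..d, W x y (e x y)) - ∫ x in a..b, ∫ y in c..d, W x y z₀ := by
  have hc₃ : Continuous ↿(pderiv₃ W) := continuous_pderiv₃ hW
  rw [← integral₂_sub (f := fun x y => W x y (e x y)) (by fun_prop) (by fun_prop)]
  congr! 4 with x y
  exact intervalIntegral.integral_eq_sub_of_hasDerivAt (fun z _ => hasDerivAt_pderiv₃ hW x y z)
    (Continuous.intervalIntegrable (by fun_prop) _ _)

theorem integral_divergence_under_graph (he : ContDiff ℝ 1 ↿e) (hU : ContDiff ℝ 1 ↿U)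
    (hV : ContDiff ℝ 1 ↿V) (hW : ContDiff ℝ 1 ↿W) (a b c d z₀ : ℝ) :
    ∫ x in a..b, ∫ y in c..d, ∫ z in z₀..e x y,
        (pderiv₁ U x y z + pderiv₂ V x y z + pderiv₃ W x y z) =
      (∫ x in a..b, ∫ y in c..d, (W x y (e x y) - U x y (e x y) * pderivFst e x y -
          V x y (e x y) * pderivSnd e x y)) -
        (∫ x in a..b, ∫ y in c..d, W x y z₀) +
        (∫ y in c..d, ((∫ z in z₀..e b y, U b y z) - ∫ z in z₀..e a y, U a y z)) +
        ∫ x in a..b, ((∫ z in z₀..e x d, V x d z) - ∫ z in z₀..e x c, V x c z) := by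
  have hx : Continuous ↿(pderivFst e) := continuous_pderivFst he
  have hy : Continuous ↿(pderivSnd e) := continuous_pderivSnd he
  have h₁ : Continuous ↿(pderiv₁ U) := continuous_pderiv₁ hU
  have h₂ : Continuous ↿(pderiv₂ V) := continuous_pderiv₂ hV
  have h₃ : Continuous ↿(pderiv₃ W) := continuous_pderiv₃ hW
  have split (x y : ℝ) : ∫ z in z₀..e x y, (pderiv₁ U x y z + pderiv₂ V x y z + pderiv₃ W x y z) =
      (∫ z in z₀..e x y, pderiv₁ U x y z) + (∫ z in z₀..e x y, pderiv₂ V x y z) +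
        ∫ z in z₀..e x y, pderiv₃ W x y z := by
    rw [← intervalIntegral.integral_add, ← intervalIntegral.integral_add] <;>
      exact Continuous.intervalIntegrable (by fun_prop) _ _
  simp only [split]
  rw [integral₂_add, integral₂_add, integral₂_sub, integral₂_sub,
    integral_pderiv₁_under_graph he hU, integral_pderiv₂_under_graph he hV,
    integral_pderiv₃_under_graph he.continuous hW]
  · ring
  all_goals fun_prop

theorem integral_divergence_le_surface {a b c d z₀ : ℝ} (hab : a ≤ b) (hcd : c ≤ d)
    (he : ContDiff ℝ 1 ↿e) (hle : ∀ x ∈ Icc a b, ∀ y ∈ Icc c d, z₀ ≤ e x y)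
    (hU : ContDiff ℝ 1 ↿U) (hV : ContDiff ℝ 1 ↿V) (hW : ContDiff ℝ 1 ↿W)
    (left : ∀ y ∈ Icc c d, ∀ z ∈ Icc z₀ (e a y), 0 ≤ U a y z)
    (right : ∀ y ∈ Icc c d, ∀ z ∈ Icc z₀ (e b y), U b y z ≤ 0)
    (front : ∀ x ∈ Icc a b, ∀ z ∈ Icc z₀ (e x c), 0 ≤ V x c z)
    (back : ∀ x ∈ Icc a b, ∀ z ∈ Icc z₀ (e x d), V x d z ≤ 0)
    (below : ∀ x ∈ Icc a b, ∀ y ∈ Icc c d, 0 ≤ W x y z₀) :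
    ∫ x in a..b, ∫ y in c..d, ∫ z in z₀..e x y,
        (pderiv₁ U x y z + pderiv₂ V x y z + pderiv₃ W x y z) ≤
      ∫ x in a..b, ∫ y in c..d, (W x y (e x y) - U x y (e x y) * pderivFst e x y -
        V x y (e x y) * pderivSnd e x y) := by
  have ha : a ∈ Icc a b := left_mem_Icc.2 hab
  have hb : b ∈ Icc a b := right_mem_Icc.2 hab
  have hc : c ∈ Icc c d := left_mem_Icc.2 hcd
  have hd : d ∈ Icc c d := right_mem_Icc.2 hcd
  have nonpos_of {f : ℝ → ℝ} {r s : ℝ} (hrs : r ≤ s) (hf : ∀ t ∈ Icc r s, f t ≤ 0) :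
      ∫ t in r..s, f t ≤ 0 := by
    simpa using intervalIntegral.integral_nonneg (μ := volume) hrs
      fun t ht => neg_nonneg.2 (hf t ht)
  have bottom_nonneg : 0 ≤ ∫ x in a..b, ∫ y in c..d, W x y z₀ := integral₂_nonneg hab hcd below
  have wall₁_nonpos :
      ∫ y in c..d, ((∫ z in z₀..e b y, U b y z) - ∫ z in z₀..e a y, U a y z) ≤ 0 :=
    nonpos_of hcd fun y hy => sub_nonpos.2 ((nonpos_of (hle b hb y hy) (right y hy)).trans
      (intervalIntegral.integral_nonneg (hle a ha y hy) (left y hy)))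
  have wall₂_nonpos :
      ∫ x in a..b, ((∫ z in z₀..e x d, V x d z) - ∫ z in z₀..e x c, V x c z) ≤ 0 :=
    nonpos_of hab fun x hx => sub_nonpos.2 ((nonpos_of (hle x hx d hd) (back x hx)).trans
      (intervalIntegral.integral_nonneg (hle x hx c hc) (front x hx)))
  rw [integral_divergence_under_graph he hU hV hW]
  linarith

theorem integral_divergence_eq_surface {a b c d z₀ : ℝ} (hab : a ≤ b) (hcd : c ≤ d)
    (he : ContDiff ℝ 1 ↿e) (hle : ∀ x ∈ Icc a b, ∀ y ∈ Icc c d, z₀ ≤ e x y)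
    (hU : ContDiff ℝ 1 ↿U) (hV : ContDiff ℝ 1 ↿V) (hW : ContDiff ℝ 1 ↿W)
    (wall₁ : ∀ x ∈ ({a, b} : Set ℝ), ∀ y ∈ Icc c d, ∀ z ∈ Icc z₀ (e x y), U x y z = 0)
    (wall₂ : ∀ y ∈ ({c, d} : Set ℝ), ∀ x ∈ Icc a b, ∀ z ∈ Icc z₀ (e x y), V x y z = 0)
    (bottom : ∀ x ∈ Icc a b, ∀ y ∈ Icc c d, W x y z₀ = 0) :
    ∫ x in a..b, ∫ y in c..d, ∫ z in z₀..e x y,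
        (pderiv₁ U x y z + pderiv₂ V x y z + pderiv₃ W x y z) =
      ∫ x in a..b, ∫ y in c..d, (W x y (e x y) - U x y (e x y) * pderivFst e x y -
        V x y (e x y) * pderivSnd e x y) := by
  have bottom_zero : ∫ x in a..b, ∫ y in c..d, W x y z₀ = 0 :=
    integral_eq_zero_on hab fun x hx => integral_eq_zero_on hcd (bottom x hx)
  have wall₁_zero :
      ∫ y in c..d, ((∫ z in z₀..e b y, U b y z) - ∫ z in z₀..e a y, U a y z) = 0 :=
    integral_eq_zero_on hcd fun y hy => by
      rw [integral_eq_zero_on (hle b (right_mem_Icc.2 hab) y hy) (wall₁ b (by simp) y hy),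
        integral_eq_zero_on (hle a (left_mem_Icc.2 hab) y hy) (wall₁ a (by simp) y hy), sub_zero]
  have wall₂_zero :
      ∫ x in a..b, ((∫ z in z₀..e x d, V x d z) - ∫ z in z₀..e x c, V x c z) = 0 :=
    integral_eq_zero_on hab fun x hx => by
      rw [integral_eq_zero_on (hle x hx d (right_mem_Icc.2 hcd)) (wall₂ d (by simp) x hx),
        integral_eq_zero_on (hle x hx c (left_mem_Icc.2 hcd)) (wall₂ c (by simp) x hx), sub_zero]
  rw [integral_divergence_under_graph he hU hV hW, bottom_zero, wall₁_zero, wall₂_zero]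
  ring

end Divergence

/-! ### Cauchy–Schwarz and Poincaré inequalities -/

theorem integral₂_mul_sq_le {f g : ℝ → ℝ → ℝ} {a b c d : ℝ} (hab : a ≤ b) (hcd : c ≤ d)
    (hf : Continuous ↿f) (hg : Continuous ↿g) :
    (∫ x in a..b, ∫ y in c..d, f x y * g x y) ^ 2 ≤
      (∫ x in a..b, ∫ y in c..d, f x y ^ 2) * ∫ x in a..b, ∫ y in c..d, g x y ^ 2 := by
  have quadratic_nonneg (s : ℝ) : 0 ≤ (∫ x in a..b, ∫ y in c..d, f x y ^ 2) * (s * s) +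
      (2 * ∫ x in a..b, ∫ y in c..d, f x y * g x y) * s + ∫ x in a..b, ∫ y in c..d, g x y ^ 2 := by
    calc 0 ≤ ∫ x in a..b, ∫ y in c..d, (s * f x y + g x y) ^ 2 :=
          integral₂_nonneg hab hcd fun x _ y _ => sq_nonneg _
      _ = ∫ x in a..b, ∫ y in c..d,
            (s * s * f x y ^ 2 + 2 * s * (f x y * g x y) + g x y ^ 2) := by
          congr! 4; ring
      _ = _ := by
          rw [integral₂_add, integral₂_add]
          · simp only [intervalIntegral.integral_const_mul]
            ring
          all_goals fun_prop
  have := discrim_le_zero quadratic_nonneg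
  rw [discrim] at this
  linarith

theorem integral_sq_le {f : ℝ → ℝ} {a b : ℝ} (hab : a ≤ b) (hf : Continuous f) :
    (∫ x in a..b, f x) ^ 2 ≤ (b - a) * ∫ x in a..b, f x ^ 2 := by
  simpa using integral₂_mul_sq_le (f := fun _ _ => 1) (g := fun x _ => f x) hab zero_le_one
    continuous_const (by fun_prop)

section Poincare

variable {f : ℝ → ℝ} {a b : ℝ}

theorem integral_sq_sub_left_le (hab : a ≤ b) (hf : ContDiff ℝ 1 f) :
    ∫ x in a..b, (f x - f a) ^ 2 ≤ (b - a) ^ 2 / 2 * ∫ x in a..b, deriv f x ^ 2 := by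
  have hf' : Continuous (deriv f) := hf.continuous_deriv le_rfl
  have pointwise (x : ℝ) (hx : x ∈ Icc a b) :
      (f x - f a) ^ 2 ≤ (x - a) * ∫ s in a..b, deriv f s ^ 2 := by
    rw [← intervalIntegral.integral_eq_sub_of_hasDerivAt
      (fun s _ => (hf.differentiable one_ne_zero s).hasDerivAt) (hf'.intervalIntegrable a x)]
    refine (integral_sq_le hx.1 hf').trans (mul_le_mul_of_nonneg_left ?_ (sub_nonneg.2 hx.1))
    exact intervalIntegral.integral_mono_interval le_rfl hx.1 hx.2
      (.of_forall fun s => sq_nonneg _) (Continuous.intervalIntegrable (by fun_prop) _ _)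
  calc ∫ x in a..b, (f x - f a) ^ 2 ≤ ∫ x in a..b, (x - a) * ∫ s in a..b, deriv f s ^ 2 :=
        intervalIntegral.integral_mono_on hab
          (((hf.continuous.sub continuous_const).pow 2).intervalIntegrable _ _)
          (Continuous.intervalIntegrable (by fun_prop) _ _) pointwise
    _ = (b - a) ^ 2 / 2 * ∫ x in a..b, deriv f x ^ 2 := by
        rw [intervalIntegral.integral_mul_const,
          intervalIntegral.integral_comp_sub_right (fun x => x), integral_id]
        ring

theorem integral_sq_sub_right_le (hab : a ≤ b) (hf : ContDiff ℝ 1 f) :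
    ∫ x in a..b, (f x - f b) ^ 2 ≤ (b - a) ^ 2 / 2 * ∫ x in a..b, deriv f x ^ 2 := by
  have := integral_sq_sub_left_le (f := fun x => f (-x)) (neg_le_neg hab) (by fun_prop)
  simp only [deriv_comp_neg, neg_sq, neg_neg] at this
  rw [intervalIntegral.integral_comp_neg (fun x => (f x - f b) ^ 2),
    intervalIntegral.integral_comp_neg (fun x => deriv f x ^ 2)] at this
  simpa [neg_add_eq_sub] using this

theorem integral_sq_sub_midpoint_le (hab : a ≤ b) (hf : ContDiff ℝ 1 f) :
    ∫ x in a..b, (f x - f ((a + b) / 2)) ^ 2 ≤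
      (b - a) ^ 2 / 8 * ∫ x in a..b, deriv f x ^ 2 := by
  have hf₀ : Continuous f := hf.continuous
  have : Continuous (deriv f) := hf.continuous_deriv le_rfl
  rw [← intervalIntegral.integral_add_adjacent_intervals (b := (a + b) / 2) (c := b)
      (f := fun x => (f x - _) ^ 2) (Continuous.intervalIntegrable (by fun_prop) _ _)
      (Continuous.intervalIntegrable (by fun_prop) _ _),
    ← intervalIntegral.integral_add_adjacent_intervals (b := (a + b) / 2) (c := b)
      (f := fun x => deriv f x ^ 2) (Continuous.intervalIntegrable (by fun_prop) _ _)
      (Continuous.intervalIntegrable (by fun_prop) _ _)]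
  have left := integral_sq_sub_right_le (a := a) (b := (a + b) / 2) (by linarith) hf
  have right := integral_sq_sub_left_le (a := (a + b) / 2) (b := b) (by linarith) hf
  rw [show ((a + b) / 2 - a) ^ 2 / 2 = (b - a) ^ 2 / 8 by ring] at left
  rw [show (b - (a + b) / 2) ^ 2 / 2 = (b - a) ^ 2 / 8 by ring] at right
  linarith

theorem integral_sq_sub_const_eq (hab : a < b) (hf : Continuous f) (k : ℝ) :
    ∫ x in a..b, (f x - k) ^ 2 =
      (∫ x in a..b, (f x - ⨍ s in a..b, f s) ^ 2) + (b - a) * ((⨍ s in a..b, f s) - k) ^ 2 := by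
  have expand (k : ℝ) : ∫ x in a..b, (f x - k) ^ 2 =
      (∫ x in a..b, f x ^ 2) - 2 * k * (∫ x in a..b, f x) + (b - a) * k ^ 2 := by
    calc ∫ x in a..b, (f x - k) ^ 2 = ∫ x in a..b, (f x ^ 2 - 2 * k * f x + k ^ 2) := by
          congr! 2; ring
      _ = _ := by
          rw [intervalIntegral.integral_add, intervalIntegral.integral_sub]
          · simp
          all_goals exact Continuous.intervalIntegrable (by fun_prop) _ _
  have mean : (b - a) * (⨍ s in a..b, f s) = ∫ x in a..b, f x := by
    rw [interval_average_eq_div, mul_div_cancel₀ _ (sub_ne_zero.2 hab.ne')]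
  rw [expand, expand, ← mean]
  ring

theorem integral_sq_sub_average_le (hab : a < b) (hf : ContDiff ℝ 1 f) :
    ∫ x in a..b, (f x - ⨍ s in a..b, f s) ^ 2 ≤
      (b - a) ^ 2 / 8 * ∫ x in a..b, deriv f x ^ 2 := by
  refine le_trans ?_ (integral_sq_sub_midpoint_le hab.le hf)
  rw [integral_sq_sub_const_eq hab hf.continuous (f ((a + b) / 2))]
  exact le_add_of_nonneg_right (mul_nonneg (sub_nonneg.2 hab.le) (sq_nonneg _))

end Poincare

section PoincareRectangle

variable {u : ℝ → ℝ → ℝ} {a b c d : ℝ}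

theorem integral_sq_sub_average_average_le (hab : a < b) (hcd : c < d) (hu : ContDiff ℝ 1 ↿u) :
    (d - c) * ∫ x in a..b, ((⨍ y in c..d, u x y) - ⨍ s in a..b, ⨍ y in c..d, u s y) ^ 2 ≤
      (b - a) ^ 2 / 8 * ∫ x in a..b, ∫ y in c..d, pderivFst u x y ^ 2 := by
  have hu₀ : Continuous ↿u := hu.continuous
  have hux : Continuous ↿(pderivFst u) := continuous_pderivFst hu
  have hd (x : ℝ) : HasDerivAt (fun s => ⨍ y in c..d, u s y) (⨍ y in c..d, pderivFst u x y) x := by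
    simp only [interval_average_eq_div]
    exact (hasDerivAt_integral_of_continuous hu₀ hux (hasDerivAt_pderivFst hu) c d x).div_const _
  have hderiv : deriv (fun s => ⨍ y in c..d, u s y) = fun x => ⨍ y in c..d, pderivFst u x y :=
    funext fun x => (hd x).deriv
  have hcont : Continuous fun x => ⨍ y in c..d, pderivFst u x y := by
    simp only [interval_average_eq_div]
    fun_prop
  have jensen (x : ℝ) : (d - c) * (⨍ y in c..d, pderivFst u x y) ^ 2 ≤
      ∫ y in c..d, pderivFst u x y ^ 2 := by
    have : 0 < d - c := sub_pos.2 hcd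
    rw [interval_average_eq_div, div_pow, mul_div_assoc', div_le_iff₀ (by positivity)]
    have := integral_sq_le hcd.le (f := pderivFst u x) (by fun_prop)
    nlinarith
  have poincare := integral_sq_sub_average_le hab (contDiff_one_iff_deriv.2
    ⟨fun x => (hd x).differentiableAt, hderiv ▸ hcont⟩)
  rw [hderiv] at poincare
  calc _ ≤ (d - c) * ((b - a) ^ 2 / 8 * ∫ x in a..b, (⨍ y in c..d, pderivFst u x y) ^ 2) :=
        mul_le_mul_of_nonneg_left poincare (sub_nonneg.2 hcd.le)
    _ = (b - a) ^ 2 / 8 * ∫ x in a..b, (d - c) * (⨍ y in c..d, pderivFst u x y) ^ 2 := by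
        rw [intervalIntegral.integral_const_mul]
        ring
    _ ≤ _ := by
        gcongr
        exact intervalIntegral.integral_mono_on hab.le
          ((continuous_const.mul (hcont.pow 2)).intervalIntegrable _ _)
          (Continuous.intervalIntegrable (by fun_prop) _ _) fun x _ => jensen x

theorem continuous_integral_sq_sub_average (hu : Continuous ↿u) :
    Continuous fun x => ∫ y in c..d, (u x y - ⨍ r in c..d, u x r) ^ 2 := by
  simp only [interval_average_eq_div]
  fun_prop

theorem integral₂_sq_sub_slice_average_le (hab : a ≤ b) (hcd : c < d) (hu : ContDiff ℝ 1 ↿u) :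
    ∫ x in a..b, ∫ y in c..d, (u x y - ⨍ r in c..d, u x r) ^ 2 ≤
      (d - c) ^ 2 / 8 * ∫ x in a..b, ∫ y in c..d, pderivSnd u x y ^ 2 := by
  have huy : Continuous ↿(pderivSnd u) := continuous_pderivSnd hu
  rw [← intervalIntegral.integral_const_mul]
  exact intervalIntegral.integral_mono_on hab
    ((continuous_integral_sq_sub_average hu.continuous).intervalIntegrable _ _)
    (Continuous.intervalIntegrable (by fun_prop) _ _)
    fun x _ => integral_sq_sub_average_le hcd (f := u x) (by fun_prop)

theorem integral₂_sq_sub_average_eq (hcd : c < d) (hu : Continuous ↿u) (k : ℝ) :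
    ∫ x in a..b, ∫ y in c..d, (u x y - k) ^ 2 =
      (∫ x in a..b, ∫ y in c..d, (u x y - ⨍ r in c..d, u x r) ^ 2) +
        (d - c) * ∫ x in a..b, ((⨍ r in c..d, u x r) - k) ^ 2 := by
  have hm : Continuous fun x => (d - c) * ((⨍ y in c..d, u x y) - k) ^ 2 := by
    simp only [interval_average_eq_div]
    fun_prop
  have slice (x : ℝ) := integral_sq_sub_const_eq hcd (f := u x) (by fun_prop) k
  simp only [slice]
  rw [intervalIntegral.integral_add
    ((continuous_integral_sq_sub_average hu).intervalIntegrable _ _)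
    (hm.intervalIntegrable _ _), intervalIntegral.integral_const_mul]

theorem integral₂_sq_sub_average_le (hab : a < b) (hcd : c < d) (hu : ContDiff ℝ 1 ↿u) :
    ∫ x in a..b, ∫ y in c..d, (u x y - ⨍ s in a..b, ⨍ r in c..d, u s r) ^ 2 ≤
      max (b - a) (d - c) ^ 2 / 8 *
        ∫ x in a..b, ∫ y in c..d, (pderivFst u x y ^ 2 + pderivSnd u x y ^ 2) := by
  have hux : Continuous ↿(pderivFst u) := continuous_pderivFst hu
  have huy : Continuous ↿(pderivSnd u) := continuous_pderivSnd hu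
  have hx₀ : 0 ≤ ∫ x in a..b, ∫ y in c..d, pderivFst u x y ^ 2 :=
    integral₂_nonneg hab.le hcd.le fun _ _ _ _ => sq_nonneg _
  have hy₀ : 0 ≤ ∫ x in a..b, ∫ y in c..d, pderivSnd u x y ^ 2 :=
    integral₂_nonneg hab.le hcd.le fun _ _ _ _ => sq_nonneg _
  have : 0 ≤ b - a := sub_nonneg.2 hab.le
  have : 0 ≤ d - c := sub_nonneg.2 hcd.le
  calc ∫ x in a..b, ∫ y in c..d, (u x y - ⨍ s in a..b, ⨍ r in c..d, u s r) ^ 2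
      ≤ (d - c) ^ 2 / 8 * (∫ x in a..b, ∫ y in c..d, pderivSnd u x y ^ 2) +
          (b - a) ^ 2 / 8 * ∫ x in a..b, ∫ y in c..d, pderivFst u x y ^ 2 := by
        rw [integral₂_sq_sub_average_eq hcd hu.continuous]
        exact add_le_add (integral₂_sq_sub_slice_average_le hab.le hcd hu)
          (integral_sq_sub_average_average_le hab hcd hu)
    _ ≤ max (b - a) (d - c) ^ 2 / 8 * (∫ x in a..b, ∫ y in c..d, pderivSnd u x y ^ 2) +
          max (b - a) (d - c) ^ 2 / 8 * ∫ x in a..b, ∫ y in c..d, pderivFst u x y ^ 2 := by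
        gcongr
        · exact le_max_right _ _
        · exact le_max_left _ _
    _ = _ := by
        rw [integral₂_add (by fun_prop) (by fun_prop)]
        ring

end PoincareRectangle

/-! ### Harmonic potentials in a tank -/

section Rellich

variable (X₁ X₂ X₃ φ : ℝ → ℝ → ℝ → ℝ)

/-- The scalar product `∇f · ∇φ` of the gradients of two functions of three variables. -/
def gradInner (f φ : ℝ → ℝ → ℝ → ℝ) (x y z : ℝ) : ℝ :=
  pderiv₁ f x y z * pderiv₁ φ x y z + pderiv₂ f x y z * pderiv₂ φ x y z +
    pderiv₃ f x y z * pderiv₃ φ x y z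

/-- The squared length `|∇φ|²` of the gradient of a function of three variables. -/
def gradSq (x y z : ℝ) : ℝ := pderiv₁ φ x y z ^ 2 + pderiv₂ φ x y z ^ 2 + pderiv₃ φ x y z ^ 2

/-- The derivative `X · ∇φ` of `φ` along the vector field `X = (X₁, X₂, X₃)`. -/
def derivAlong (x y z : ℝ) : ℝ :=
  X₁ x y z * pderiv₁ φ x y z + X₂ x y z * pderiv₂ φ x y z + X₃ x y z * pderiv₃ φ x y z

/-- The density `∑ᵢⱼ ∂ᵢXⱼ ∂ᵢφ ∂ⱼφ - (div X) |∇φ|² / 2`. For harmonic `φ` it is the divergence of the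
Rellich field `(X · ∇φ) ∇φ - |∇φ|² X / 2`. -/
def rellichDensity (x y z : ℝ) : ℝ :=
  gradInner X₁ φ x y z * pderiv₁ φ x y z + gradInner X₂ φ x y z * pderiv₂ φ x y z +
    gradInner X₃ φ x y z * pderiv₃ φ x y z -
      gradSq φ x y z / 2 * (pderiv₁ X₁ x y z + pderiv₂ X₂ x y z + pderiv₃ X₃ x y z)

/-- The first component of the Rellich field `(X · ∇φ) ∇φ - |∇φ|² X / 2`. -/
def rellichField₁ (x y z : ℝ) : ℝ :=
  derivAlong X₁ X₂ X₃ φ x y z * pderiv₁ φ x y z - gradSq φ x y z / 2 * X₁ x y z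

/-- The second component of the Rellich field `(X · ∇φ) ∇φ - |∇φ|² X / 2`. -/
def rellichField₂ (x y z : ℝ) : ℝ :=
  derivAlong X₁ X₂ X₃ φ x y z * pderiv₂ φ x y z - gradSq φ x y z / 2 * X₂ x y z

/-- The third component of the Rellich field `(X · ∇φ) ∇φ - |∇φ|² X / 2`. -/
def rellichField₃ (x y z : ℝ) : ℝ :=
  derivAlong X₁ X₂ X₃ φ x y z * pderiv₃ φ x y z - gradSq φ x y z / 2 * X₃ x y z

variable {X₁ X₂ X₃ φ}

theorem contDiff_gradSq (hφ : ContDiff ℝ 2 ↿φ) : ContDiff ℝ 1 ↿(gradSq φ) :=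
  (((contDiff_pderiv₁ hφ (by norm_num)).pow 2).add ((contDiff_pderiv₂ hφ (by norm_num)).pow 2)).add
    ((contDiff_pderiv₃ hφ (by norm_num)).pow 2)

theorem contDiff_derivAlong (h₁ : ContDiff ℝ 1 ↿X₁) (h₂ : ContDiff ℝ 1 ↿X₂) (h₃ : ContDiff ℝ 1 ↿X₃)
    (hφ : ContDiff ℝ 2 ↿φ) : ContDiff ℝ 1 ↿(derivAlong X₁ X₂ X₃ φ) :=
  ((h₁.mul (contDiff_pderiv₁ hφ (by norm_num))).add
    (h₂.mul (contDiff_pderiv₂ hφ (by norm_num)))).add (h₃.mul (contDiff_pderiv₃ hφ (by norm_num)))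

theorem hasDerivAt_rellich {v₁ v₂ v₃ p₁ p₂ p₃ v p : ℝ → ℝ} {v₁' v₂' v₃' p₁' p₂' p₃' v' p' s : ℝ}
    (hv₁ : HasDerivAt v₁ v₁' s) (hv₂ : HasDerivAt v₂ v₂' s) (hv₃ : HasDerivAt v₃ v₃' s)
    (hp₁ : HasDerivAt p₁ p₁' s) (hp₂ : HasDerivAt p₂ p₂' s) (hp₃ : HasDerivAt p₃ p₃' s)
    (hv : HasDerivAt v v' s) (hp : HasDerivAt p p' s) :
    HasDerivAt (fun r => (v₁ r * p₁ r + v₂ r * p₂ r + v₃ r * p₃ r) * p r -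
        (p₁ r ^ 2 + p₂ r ^ 2 + p₃ r ^ 2) / 2 * v r)
      ((v₁' * p₁ s + v₂' * p₂ s + v₃' * p₃ s) * p s +
        (v₁ s * p₁' + v₂ s * p₂' + v₃ s * p₃') * p s +
        (v₁ s * p₁ s + v₂ s * p₂ s + v₃ s * p₃ s) * p' -
        (p₁ s * p₁' + p₂ s * p₂' + p₃ s * p₃') * v s -
        (p₁ s ^ 2 + p₂ s ^ 2 + p₃ s ^ 2) / 2 * v') s := by
  refine (((((hv₁.fun_mul hp₁).fun_add (hv₂.fun_mul hp₂)).fun_add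
    (hv₃.fun_mul hp₃)).fun_mul hp).fun_sub (((((hp₁.fun_pow 2).fun_add
      (hp₂.fun_pow 2)).fun_add (hp₃.fun_pow 2)).div_const 2).fun_mul hv)).congr_deriv ?_
  push_cast
  ring

theorem divergence_rellichField (h₁ : ContDiff ℝ 1 ↿X₁) (h₂ : ContDiff ℝ 1 ↿X₂)
    (h₃ : ContDiff ℝ 1 ↿X₃) (hφ : ContDiff ℝ 2 ↿φ) (x y z : ℝ) :
    pderiv₁ (rellichField₁ X₁ X₂ X₃ φ) x y z + pderiv₂ (rellichField₂ X₁ X₂ X₃ φ) x y z +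
        pderiv₃ (rellichField₃ X₁ X₂ X₃ φ) x y z =
      rellichDensity X₁ X₂ X₃ φ x y z + derivAlong X₁ X₂ X₃ φ x y z *
        (pderiv₁ (pderiv₁ φ) x y z + pderiv₂ (pderiv₂ φ) x y z + pderiv₃ (pderiv₃ φ) x y z) := by
  have c₁ : ContDiff ℝ 1 ↿(pderiv₁ φ) := contDiff_pderiv₁ hφ (by norm_num)
  have c₂ : ContDiff ℝ 1 ↿(pderiv₂ φ) := contDiff_pderiv₂ hφ (by norm_num)
  have c₃ : ContDiff ℝ 1 ↿(pderiv₃ φ) := contDiff_pderiv₃ hφ (by norm_num)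
  have div₁ : pderiv₁ (rellichField₁ X₁ X₂ X₃ φ) x y z = _ :=
    (hasDerivAt_rellich (hasDerivAt_pderiv₁ h₁ x y z) (hasDerivAt_pderiv₁ h₂ x y z)
      (hasDerivAt_pderiv₁ h₃ x y z) (hasDerivAt_pderiv₁ c₁ x y z) (hasDerivAt_pderiv₁ c₂ x y z)
      (hasDerivAt_pderiv₁ c₃ x y z) (hasDerivAt_pderiv₁ h₁ x y z)
      (hasDerivAt_pderiv₁ c₁ x y z)).deriv
  have div₂ : pderiv₂ (rellichField₂ X₁ X₂ X₃ φ) x y z = _ :=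
    (hasDerivAt_rellich (hasDerivAt_pderiv₂ h₁ x y z) (hasDerivAt_pderiv₂ h₂ x y z)
      (hasDerivAt_pderiv₂ h₃ x y z) (hasDerivAt_pderiv₂ c₁ x y z) (hasDerivAt_pderiv₂ c₂ x y z)
      (hasDerivAt_pderiv₂ c₃ x y z) (hasDerivAt_pderiv₂ h₂ x y z)
      (hasDerivAt_pderiv₂ c₂ x y z)).deriv
  have div₃ : pderiv₃ (rellichField₃ X₁ X₂ X₃ φ) x y z = _ :=
    (hasDerivAt_rellich (hasDerivAt_pderiv₃ h₁ x y z) (hasDerivAt_pderiv₃ h₂ x y z)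
      (hasDerivAt_pderiv₃ h₃ x y z) (hasDerivAt_pderiv₃ c₁ x y z) (hasDerivAt_pderiv₃ c₂ x y z)
      (hasDerivAt_pderiv₃ c₃ x y z) (hasDerivAt_pderiv₃ h₃ x y z)
      (hasDerivAt_pderiv₃ c₃ x y z)).deriv
  rw [div₁, div₂, div₃, pderiv₁_pderiv₂ hφ, pderiv₁_pderiv₃ hφ, pderiv₂_pderiv₃ hφ]
  simp only [rellichDensity, gradInner, gradSq, derivAlong]
  ring

theorem divergence_mul_gradient {F : ℝ → ℝ → ℝ → ℝ} (hF : ContDiff ℝ 1 ↿F) (hφ : ContDiff ℝ 2 ↿φ)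
    (x y z : ℝ) :
    pderiv₁ (fun x y z => F x y z * pderiv₁ φ x y z) x y z +
        pderiv₂ (fun x y z => F x y z * pderiv₂ φ x y z) x y z +
        pderiv₃ (fun x y z => F x y z * pderiv₃ φ x y z) x y z =
      gradInner F φ x y z + F x y z *
        (pderiv₁ (pderiv₁ φ) x y z + pderiv₂ (pderiv₂ φ) x y z + pderiv₃ (pderiv₃ φ) x y z) := by
  have div₁ : pderiv₁ (fun x y z => F x y z * pderiv₁ φ x y z) x y z = _ :=
    ((hasDerivAt_pderiv₁ hF x y z).fun_mul
      (hasDerivAt_pderiv₁ (contDiff_pderiv₁ hφ (by norm_num)) x y z)).deriv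
  have div₂ : pderiv₂ (fun x y z => F x y z * pderiv₂ φ x y z) x y z = _ :=
    ((hasDerivAt_pderiv₂ hF x y z).fun_mul
      (hasDerivAt_pderiv₂ (contDiff_pderiv₂ hφ (by norm_num)) x y z)).deriv
  have div₃ : pderiv₃ (fun x y z => F x y z * pderiv₃ φ x y z) x y z = _ :=
    ((hasDerivAt_pderiv₃ hF x y z).fun_mul
      (hasDerivAt_pderiv₃ (contDiff_pderiv₃ hφ (by norm_num)) x y z)).deriv
  rw [div₁, div₂, div₃, gradInner]
  ring

theorem rellichDensity_shear {e : ℝ → ℝ → ℝ} (he : ContDiff ℝ 1 ↿e) (κ x y z : ℝ) :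
    rellichDensity (fun x _ _ => x) (fun _ y _ => y) (fun x y z => z - κ * e x y) φ x y z =
      -(gradSq φ x y z / 2) - κ * ((pderivFst e x y * pderiv₁ φ x y z +
        pderivSnd e x y * pderiv₂ φ x y z) * pderiv₃ φ x y z) := by
  have he₁ : deriv (fun s => z - κ * e s y) x = _ :=
    (((hasDerivAt_pderivFst he x y).const_mul κ).const_sub z).deriv
  have he₂ : deriv (fun s => z - κ * e x s) y = _ :=
    (((hasDerivAt_pderivSnd he x y).const_mul κ).const_sub z).deriv
  have he₃ : deriv (fun s => s - κ * e x y) z = 1 := ((hasDerivAt_id z).sub_const _).deriv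
  have hid (s : ℝ) : deriv (fun r : ℝ => r) s = 1 := deriv_id s
  simp only [rellichDensity, gradInner, gradSq, pderiv₁, pderiv₂, pderiv₃, he₁, he₂, he₃, hid,
    deriv_const]
  ring

theorem mul_add_mul_mul_le {a b B : ℝ} (hB : 0 ≤ B) (hab : a ^ 2 + b ^ 2 ≤ B ^ 2) (p q r : ℝ) :
    (a * p + b * q) * r ≤ B / 2 * (p ^ 2 + q ^ 2 + r ^ 2) := by
  have cauchy_schwarz : (a * p + b * q) ^ 2 ≤ B ^ 2 * (p ^ 2 + q ^ 2) := by
    nlinarith [sq_nonneg (a * q - b * p), mul_nonneg (sub_nonneg.2 hab)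
      (add_nonneg (sq_nonneg p) (sq_nonneg q))]
  have am_gm : (p ^ 2 + q ^ 2) * r ^ 2 ≤ ((p ^ 2 + q ^ 2 + r ^ 2) / 2) ^ 2 := by
    nlinarith [sq_nonneg (p ^ 2 + q ^ 2 - r ^ 2)]
  refine le_of_abs_le (abs_le_of_sq_le_sq ?_ (by positivity))
  calc ((a * p + b * q) * r) ^ 2 = (a * p + b * q) ^ 2 * r ^ 2 := mul_pow _ _ _
    _ ≤ B ^ 2 * (p ^ 2 + q ^ 2) * r ^ 2 := by gcongr
    _ = B ^ 2 * ((p ^ 2 + q ^ 2) * r ^ 2) := mul_assoc _ _ _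
    _ ≤ B ^ 2 * ((p ^ 2 + q ^ 2 + r ^ 2) / 2) ^ 2 := by gcongr
    _ = (B / 2 * (p ^ 2 + q ^ 2 + r ^ 2)) ^ 2 := by ring

end Rellich

/-- The normal velocity `∂φ/∂z - ∇e · ∇φ` that the potential `φ` induces on the surface
`z = e(x, y)`, not normalised by the length of the normal `(-∇e, 1)`. -/
def normalVelocity (e : ℝ → ℝ → ℝ) (φ : ℝ → ℝ → ℝ → ℝ) (x y : ℝ) : ℝ :=
  pderiv₃ φ x y (e x y) -
    (pderivFst e x y * pderiv₁ φ x y (e x y) + pderivSnd e x y * pderiv₂ φ x y (e x y))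

/-- The density, on the surface `z = e(x, y)`, of the flux of the Rellich field of
`X = (x, y, z - κ e(x, y))`. -/
def pohozaevSurfaceDensity (κ : ℝ) (e : ℝ → ℝ → ℝ) (φ : ℝ → ℝ → ℝ → ℝ) (x y : ℝ) : ℝ :=
  (x * pderiv₁ φ x y (e x y) + y * pderiv₂ φ x y (e x y) +
      (1 - κ) * e x y * pderiv₃ φ x y (e x y)) * normalVelocity e φ x y -
    gradSq φ x y (e x y) / 2 * ((1 - κ) * e x y - (x * pderivFst e x y + y * pderivSnd e x y))

/-- The flux through the surface `z = e(x, y)` over the rectangle `[0, L₁] × [0, L₂]` of the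
Rellich field of `X = (x, y, z - κ e(x, y))`. -/
def pohozaevSurface (L₁ L₂ κ : ℝ) (e : ℝ → ℝ → ℝ) (φ : ℝ → ℝ → ℝ → ℝ) : ℝ :=
  ∫ x in 0..L₁, ∫ y in 0..L₂, pohozaevSurfaceDensity κ e φ x y

theorem continuous_pohozaevSurfaceDensity {e : ℝ → ℝ → ℝ} {φ : ℝ → ℝ → ℝ → ℝ}
    (he : ContDiff ℝ 1 ↿e) (hφ : ContDiff ℝ 2 ↿φ) (κ : ℝ) :
    Continuous ↿(pohozaevSurfaceDensity κ e φ) := by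
  have hφ₁ : ContDiff ℝ 1 ↿φ := hφ.of_le one_le_two
  have cx : Continuous ↿(pderivFst e) := continuous_pderivFst he
  have cy : Continuous ↿(pderivSnd e) := continuous_pderivSnd he
  have c₁ : Continuous ↿(pderiv₁ φ) := continuous_pderiv₁ hφ₁
  have c₂ : Continuous ↿(pderiv₂ φ) := continuous_pderiv₂ hφ₁
  have c₃ : Continuous ↿(pderiv₃ φ) := continuous_pderiv₃ hφ₁
  have cS : Continuous ↿(gradSq φ) := (contDiff_gradSq hφ).continuous
  have cN : Continuous ↿(normalVelocity e φ) := by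
    unfold normalVelocity
    fun_prop
  unfold pohozaevSurfaceDensity
  fun_prop

/-- `φ` is the velocity potential of a flow in the tank
`{(x, y, z) | 0 ≤ x ≤ L₁, 0 ≤ y ≤ L₂, -h ≤ z ≤ e(x, y)}` that does not cross the walls and the
bottom. -/
structure IsTankPotential (L₁ L₂ h : ℝ) (e : ℝ → ℝ → ℝ) (φ : ℝ → ℝ → ℝ → ℝ) : Prop where
  width_nonneg : 0 ≤ L₁
  length_nonneg : 0 ≤ L₂
  contDiff_surface : ContDiff ℝ 1 ↿e
  contDiff_potential : ContDiff ℝ 2 ↿φ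
  bottom_le : ∀ x ∈ Icc 0 L₁, ∀ y ∈ Icc 0 L₂, -h ≤ e x y
  laplace : ∀ x ∈ Icc 0 L₁, ∀ y ∈ Icc 0 L₂, ∀ z ∈ Icc (-h) (e x y),
    pderiv₁ (pderiv₁ φ) x y z + pderiv₂ (pderiv₂ φ) x y z + pderiv₃ (pderiv₃ φ) x y z = 0
  wall₁ : ∀ x ∈ ({0, L₁} : Set ℝ), ∀ y ∈ Icc 0 L₂, ∀ z ∈ Icc (-h) (e x y), pderiv₁ φ x y z = 0
  wall₂ : ∀ y ∈ ({0, L₂} : Set ℝ), ∀ x ∈ Icc 0 L₁, ∀ z ∈ Icc (-h) (e x y), pderiv₂ φ x y z = 0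
  bottom : ∀ x ∈ Icc 0 L₁, ∀ y ∈ Icc 0 L₂, pderiv₃ φ x y (-h) = 0

namespace IsTankPotential

variable {L₁ L₂ h : ℝ} {e : ℝ → ℝ → ℝ} {φ : ℝ → ℝ → ℝ → ℝ}

theorem integral_mul_normalVelocity {F : ℝ → ℝ → ℝ → ℝ} (hφ : IsTankPotential L₁ L₂ h e φ)
    (hF : ContDiff ℝ 1 ↿F) :
    ∫ x in 0..L₁, ∫ y in 0..L₂, F x y (e x y) * normalVelocity e φ x y =
      ∫ x in 0..L₁, ∫ y in 0..L₂, ∫ z in -h..e x y, gradInner F φ x y z := by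
  have c₁ : ContDiff ℝ 1 ↿(pderiv₁ φ) := contDiff_pderiv₁ hφ.contDiff_potential (by norm_num)
  have c₂ : ContDiff ℝ 1 ↿(pderiv₂ φ) := contDiff_pderiv₂ hφ.contDiff_potential (by norm_num)
  have c₃ : ContDiff ℝ 1 ↿(pderiv₃ φ) := contDiff_pderiv₃ hφ.contDiff_potential (by norm_num)
  have divergence_eq : ∀ x ∈ Icc 0 L₁, ∀ y ∈ Icc 0 L₂, ∫ z in -h..e x y, gradInner F φ x y z =
      ∫ z in -h..e x y, (pderiv₁ (fun x y z => F x y z * pderiv₁ φ x y z) x y z +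
        pderiv₂ (fun x y z => F x y z * pderiv₂ φ x y z) x y z +
        pderiv₃ (fun x y z => F x y z * pderiv₃ φ x y z) x y z) := fun x hx y hy =>
    integral_congr_on (hφ.bottom_le x hx y hy) fun z hz => by
      rw [divergence_mul_gradient hF hφ.contDiff_potential, hφ.laplace x hx y hy z hz, mul_zero,
        add_zero]
  rw [integral₂_congr_on hφ.width_nonneg hφ.length_nonneg divergence_eq,
    integral_divergence_eq_surface hφ.width_nonneg hφ.length_nonneg hφ.contDiff_surface
      hφ.bottom_le (hF.mul c₁) (hF.mul c₂) (hF.mul c₃)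
      (fun x hx y hy z hz => by rw [hφ.wall₁ x hx y hy z hz, mul_zero])
      (fun y hy x hx z hz => by rw [hφ.wall₂ y hy x hx z hz, mul_zero])
      (fun x hx y hy => by rw [hφ.bottom x hx y hy, mul_zero])]
  congr! 4 with x y
  simp only [normalVelocity]
  ring

theorem rellich_le {X₁ X₂ X₃ : ℝ → ℝ → ℝ → ℝ} (hφ : IsTankPotential L₁ L₂ h e φ)
    (h₁ : ContDiff ℝ 1 ↿X₁) (h₂ : ContDiff ℝ 1 ↿X₂) (h₃ : ContDiff ℝ 1 ↿X₃)
    (left : ∀ y ∈ Icc 0 L₂, ∀ z ∈ Icc (-h) (e 0 y), X₁ 0 y z ≤ 0)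
    (right : ∀ y ∈ Icc 0 L₂, ∀ z ∈ Icc (-h) (e L₁ y), 0 ≤ X₁ L₁ y z)
    (front : ∀ x ∈ Icc 0 L₁, ∀ z ∈ Icc (-h) (e x 0), X₂ x 0 z ≤ 0)
    (back : ∀ x ∈ Icc 0 L₁, ∀ z ∈ Icc (-h) (e x L₂), 0 ≤ X₂ x L₂ z)
    (below : ∀ x ∈ Icc 0 L₁, ∀ y ∈ Icc 0 L₂, X₃ x y (-h) ≤ 0) :
    ∫ x in 0..L₁, ∫ y in 0..L₂, ∫ z in -h..e x y, rellichDensity X₁ X₂ X₃ φ x y z ≤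
      ∫ x in 0..L₁, ∫ y in 0..L₂,
        (derivAlong X₁ X₂ X₃ φ x y (e x y) * normalVelocity e φ x y -
          gradSq φ x y (e x y) / 2 * (X₃ x y (e x y) - (X₁ x y (e x y) * pderivFst e x y +
            X₂ x y (e x y) * pderivSnd e x y))) := by
  have hφ₂ := hφ.contDiff_potential
  have c₁ : ContDiff ℝ 1 ↿(pderiv₁ φ) := contDiff_pderiv₁ hφ₂ (by norm_num)
  have c₂ : ContDiff ℝ 1 ↿(pderiv₂ φ) := contDiff_pderiv₂ hφ₂ (by norm_num)
  have c₃ : ContDiff ℝ 1 ↿(pderiv₃ φ) := contDiff_pderiv₃ hφ₂ (by norm_num)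
  have cX : ContDiff ℝ 1 ↿(derivAlong X₁ X₂ X₃ φ) := contDiff_derivAlong h₁ h₂ h₃ hφ₂
  have cS : ContDiff ℝ 1 ↿fun x y z => gradSq φ x y z / 2 := (contDiff_gradSq hφ₂).div_const 2
  have half_nonneg (x y z : ℝ) : 0 ≤ gradSq φ x y z / 2 := by unfold gradSq; positivity
  have density_eq : ∀ x ∈ Icc 0 L₁, ∀ y ∈ Icc 0 L₂,
      ∫ z in -h..e x y, rellichDensity X₁ X₂ X₃ φ x y z =
        ∫ z in -h..e x y, (pderiv₁ (rellichField₁ X₁ X₂ X₃ φ) x y z +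
          pderiv₂ (rellichField₂ X₁ X₂ X₃ φ) x y z + pderiv₃ (rellichField₃ X₁ X₂ X₃ φ) x y z) :=
    fun x hx y hy => integral_congr_on (hφ.bottom_le x hx y hy) fun z hz => by
      rw [divergence_rellichField h₁ h₂ h₃ hφ₂, hφ.laplace x hx y hy z hz, mul_zero, add_zero]
  rw [integral₂_congr_on hφ.width_nonneg hφ.length_nonneg density_eq]
  refine (integral_divergence_le_surface hφ.width_nonneg hφ.length_nonneg hφ.contDiff_surface
    hφ.bottom_le ((cX.mul c₁).sub (cS.mul h₁)) ((cX.mul c₂).sub (cS.mul h₂))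
    ((cX.mul c₃).sub (cS.mul h₃)) (fun y hy z hz => ?_) (fun y hy z hz => ?_)
    (fun x hx z hz => ?_) (fun x hx z hz => ?_) (fun x hx y hy => ?_)).trans_eq ?_
  · rw [rellichField₁, hφ.wall₁ 0 (by simp) y hy z hz]
    nlinarith [half_nonneg 0 y z, left y hy z hz]
  · rw [rellichField₁, hφ.wall₁ L₁ (by simp) y hy z hz]
    nlinarith [half_nonneg L₁ y z, right y hy z hz]
  · rw [rellichField₂, hφ.wall₂ 0 (by simp) x hx z hz]
    nlinarith [half_nonneg x 0 z, front x hx z hz]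
  · rw [rellichField₂, hφ.wall₂ L₂ (by simp) x hx z hz]
    nlinarith [half_nonneg x L₂ z, back x hx z hz]
  · rw [rellichField₃, hφ.bottom x hx y hy]
    nlinarith [half_nonneg x y (-h), below x hx y hy]
  · congr! 4 with x y
    simp only [rellichField₁, rellichField₂, rellichField₃, normalVelocity]
    ring

theorem pohozaev_le {κ B : ℝ} (hφ : IsTankPotential L₁ L₂ h e φ) (hκ : 0 ≤ κ) (hB : 0 ≤ B)
    (hdepth : ∀ x ∈ Icc 0 L₁, ∀ y ∈ Icc 0 L₂, 0 ≤ h + κ * e x y)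
    (hslope : ∀ x ∈ Icc 0 L₁, ∀ y ∈ Icc 0 L₂, pderivFst e x y ^ 2 + pderivSnd e x y ^ 2 ≤ B ^ 2) :
    -((1 + κ * B) / 2) * ∫ x in 0..L₁, ∫ y in 0..L₂, ∫ z in -h..e x y, gradSq φ x y z ≤
      pohozaevSurface L₁ L₂ κ e φ := by
  have he : ContDiff ℝ 1 ↿e := hφ.contDiff_surface
  have hφ₁ : ContDiff ℝ 1 ↿φ := hφ.contDiff_potential.of_le (by norm_num)
  have cx : Continuous ↿(pderivFst e) := continuous_pderivFst he
  have cy : Continuous ↿(pderivSnd e) := continuous_pderivSnd he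
  have c₁ : Continuous ↿(pderiv₁ φ) := continuous_pderiv₁ hφ₁
  have c₂ : Continuous ↿(pderiv₂ φ) := continuous_pderiv₂ hφ₁
  have c₃ : Continuous ↿(pderiv₃ φ) := continuous_pderiv₃ hφ₁
  have cS : Continuous ↿(gradSq φ) := (contDiff_gradSq hφ.contDiff_potential).continuous
  have density_ge : ∀ x ∈ Icc 0 L₁, ∀ y ∈ Icc 0 L₂, ∀ z, -((1 + κ * B) / 2) * gradSq φ x y z ≤
      rellichDensity (fun x _ _ => x) (fun _ y _ => y) (fun x y z => z - κ * e x y) φ x y z :=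
    fun x hx y hy z => by
      rw [rellichDensity_shear he]
      have := mul_le_mul_of_nonneg_left (mul_add_mul_mul_le hB (hslope x hx y hy)
        (pderiv₁ φ x y z) (pderiv₂ φ x y z) (pderiv₃ φ x y z)) hκ
      simp only [gradSq]
      linarith
  simp only [rellichDensity_shear he] at density_ge
  have rellich := hφ.rellich_le (X₁ := fun x _ _ => x) (X₂ := fun _ y _ => y)
    (X₃ := fun x y z => z - κ * e x y) (by fun_prop) (by fun_prop) (by fun_prop)
    (fun _ _ _ _ => le_rfl) (fun _ _ _ _ => hφ.width_nonneg) (fun _ _ _ _ => le_rfl)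
    (fun _ _ _ _ => hφ.length_nonneg) (fun x hx y hy => by linarith [hdepth x hx y hy])
  simp only [rellichDensity_shear he] at rellich
  simp only [← intervalIntegral.integral_const_mul]
  refine (integral₂_mono_on hφ.width_nonneg hφ.length_nonneg (by fun_prop) (by fun_prop)
    fun x hx y hy => intervalIntegral.integral_mono_on (hφ.bottom_le x hx y hy)
      (Continuous.intervalIntegrable (by fun_prop) _ _)
      (Continuous.intervalIntegrable (by fun_prop) _ _)
      fun z _ => density_ge x hx y hy z).trans (rellich.trans_eq ?_)
  rw [pohozaevSurface]
  congr! 4 with x y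
  simp only [pohozaevSurfaceDensity, derivAlong]
  ring

theorem integral_gradSq_nonneg (hφ : IsTankPotential L₁ L₂ h e φ) :
    0 ≤ ∫ x in 0..L₁, ∫ y in 0..L₂, ∫ z in -h..e x y, gradSq φ x y z :=
  integral₂_nonneg hφ.width_nonneg hφ.length_nonneg fun x hx y hy =>
    intervalIntegral.integral_nonneg (hφ.bottom_le x hx y hy) fun z _ => by
      unfold gradSq; positivity

end IsTankPotential

/-! ### The multiplier functional -/

section Multiplier

/-- The multiplier `x ∂u/∂x + y ∂u/∂y + (3/4) u`: an infinitesimal dilation, with the weight `3/4`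
that makes potential and kinetic energy enter the virial estimate with the same coefficient. -/
def multiplier (u : ℝ → ℝ → ℝ) (x y : ℝ) : ℝ :=
  x * pderivFst u x y + y * pderivSnd u x y + 3 / 4 * u x y

/-- The pairing over the rectangle `[0, L₁] × [0, L₂]` of `e` with the multiplier applied to `u`. -/
def multiplierFunctional (L₁ L₂ : ℝ) (e u : ℝ → ℝ → ℝ) : ℝ :=
  ∫ x in 0..L₁, ∫ y in 0..L₂, e x y * multiplier u x y

/-- The flux of the vector field `f(x, y) (x, y)` through the boundary of `[0, L₁] × [0, L₂]`; the
sides through the origin do not contribute. -/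
def boundaryFlux (L₁ L₂ : ℝ) (f : ℝ → ℝ → ℝ) : ℝ :=
  L₁ * (∫ y in 0..L₂, f L₁ y) + L₂ * ∫ x in 0..L₁, f x L₂

theorem continuous_uncurry_multiplier {ψ : ℝ → ℝ → ℝ → ℝ} (hψ : ContDiff ℝ 1 ↿ψ) :
    Continuous ↿fun t => multiplier (ψ t) := by
  have h₂ : Continuous ↿(pderiv₂ ψ) := continuous_pderiv₂ hψ
  have h₃ : Continuous ↿(pderiv₃ ψ) := continuous_pderiv₃ hψ
  change Continuous ↿fun t x y => x * pderiv₂ ψ t x y + y * pderiv₃ ψ t x y + 3 / 4 * ψ t x y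
  fun_prop

theorem continuous_multiplier {u : ℝ → ℝ → ℝ} (hu : ContDiff ℝ 1 ↿u) :
    Continuous ↿(multiplier u) := by
  have h : Continuous ↿fun _ : ℝ => multiplier u :=
    continuous_uncurry_multiplier (ψ := fun _ => u) (by fun_prop)
  exact h.comp (continuous_const.prodMk continuous_id : Continuous fun p : ℝ × ℝ => ((0 : ℝ), p))

theorem continuous_multiplierFunctional {η ψ : ℝ → ℝ → ℝ → ℝ} (hη : Continuous ↿η)
    (hψ : ContDiff ℝ 1 ↿ψ) (L₁ L₂ : ℝ) :
    Continuous fun t => multiplierFunctional L₁ L₂ (η t) (ψ t) :=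
  continuous_integral₂ (F := fun t x y => η t x y * multiplier (ψ t) x y)
    (hη.mul (continuous_uncurry_multiplier hψ)) 0 L₁ 0 L₂

theorem boundaryFlux_eq_integral {f : ℝ → ℝ → ℝ} (hf : ContDiff ℝ 1 ↿f) (L₁ L₂ : ℝ) :
    boundaryFlux L₁ L₂ f =
      ∫ x in 0..L₁, ∫ y in 0..L₂, (2 * f x y + x * pderivFst f x y + y * pderivSnd f x y) := by
  have h₁ : Continuous ↿(pderivFst f) := continuous_pderivFst hf
  have h₂ : Continuous ↿(pderivSnd f) := continuous_pderivSnd hf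
  have flux₁ : ∫ x in 0..L₁, ∫ y in 0..L₂, (1 * f x y + x * pderivFst f x y) =
      ∫ y in 0..L₂, (L₁ * f L₁ y - 0 * f 0 y) :=
    integral₂_of_hasDerivAt_left (f := fun x y => x * f x y) (by fun_prop)
      (fun x y => (hasDerivAt_id' x).fun_mul (hasDerivAt_pderivFst hf x y)) _ _ _ _
  have flux₂ : ∫ x in 0..L₁, ∫ y in 0..L₂, (1 * f x y + y * pderivSnd f x y) =
      ∫ x in 0..L₁, (L₂ * f x L₂ - 0 * f x 0) :=
    integral₂_of_hasDerivAt_right (f := fun x y => y * f x y) (by fun_prop)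
      (fun x y => (hasDerivAt_id' y).fun_mul (hasDerivAt_pderivSnd hf x y)) _ _ _ _
  simp only [zero_mul, sub_zero, intervalIntegral.integral_const_mul] at flux₁ flux₂
  rw [boundaryFlux, ← flux₁, ← flux₂, ← integral₂_add (by fun_prop) (by fun_prop)]
  congr! 4 with x y
  ring

theorem boundaryFlux_add_multiplierFunctional {e e' u v : ℝ → ℝ → ℝ} (he : ContDiff ℝ 1 ↿e)
    (he' : Continuous ↿e') (hu : ContDiff ℝ 1 ↿u) (hv : ContDiff ℝ 1 ↿v) (g L₁ L₂ : ℝ) :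
    boundaryFlux L₁ L₂ (fun x y => -e x y * v x y - g / 2 * e x y ^ 2) +
        (multiplierFunctional L₁ L₂ e' u + multiplierFunctional L₁ L₂ e v) =
      ∫ x in 0..L₁, ∫ y in 0..L₂, (e' x y * multiplier u x y - 5 / 4 * e x y * v x y -
        g * e x y ^ 2 - (x * pderivFst e x y + y * pderivSnd e x y) * (v x y + g * e x y)) := by
  set f : ℝ → ℝ → ℝ := fun x y => -e x y * v x y - g / 2 * e x y ^ 2
  have hf : ContDiff ℝ 1 ↿f := by fun_prop
  have cf : Continuous ↿f := hf.continuous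
  have cx : Continuous ↿(pderivFst f) := continuous_pderivFst hf
  have cy : Continuous ↿(pderivSnd f) := continuous_pderivSnd hf
  have cu : Continuous ↿(multiplier u) := continuous_multiplier hu
  have cv : Continuous ↿(multiplier v) := continuous_multiplier hv
  have ce : Continuous ↿e := he.continuous
  have hx (x y : ℝ) : pderivFst f x y = _ :=
    (((hasDerivAt_pderivFst he x y).fun_neg.fun_mul (hasDerivAt_pderivFst hv x y)).fun_sub
      (((hasDerivAt_pderivFst he x y).fun_pow 2).const_mul (g / 2))).deriv
  have hy (x y : ℝ) : pderivSnd f x y = _ :=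
    (((hasDerivAt_pderivSnd he x y).fun_neg.fun_mul (hasDerivAt_pderivSnd hv x y)).fun_sub
      (((hasDerivAt_pderivSnd he x y).fun_pow 2).const_mul (g / 2))).deriv
  rw [boundaryFlux_eq_integral hf, multiplierFunctional, multiplierFunctional,
    ← integral₂_add (by fun_prop) (by fun_prop), ← integral₂_add (by fun_prop) (by fun_prop)]
  congr! 4 with x y
  rw [hx, hy]
  simp only [multiplier, f]
  push_cast
  ring

theorem hasDerivAt_multiplierFunctional {η ψ : ℝ → ℝ → ℝ → ℝ} (hη : ContDiff ℝ 1 ↿η)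
    (hψ : ContDiff ℝ 2 ↿ψ) (L₁ L₂ t : ℝ) :
    HasDerivAt (fun s => multiplierFunctional L₁ L₂ (η s) (ψ s))
      (multiplierFunctional L₁ L₂ (pderiv₁ η t) (ψ t) +
        multiplierFunctional L₁ L₂ (η t) (pderiv₁ ψ t)) t := by
  have hψ₁ : ContDiff ℝ 1 ↿ψ := hψ.of_le (by norm_num)
  have hψt : ContDiff ℝ 1 ↿(pderiv₁ ψ) := contDiff_pderiv₁ hψ (by norm_num)
  have cη' : Continuous ↿(pderiv₁ η) := continuous_pderiv₁ hη
  have cM : Continuous ↿fun t => multiplier (ψ t) := continuous_uncurry_multiplier hψ₁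
  have cM' : Continuous ↿fun t => multiplier (pderiv₁ ψ t) := continuous_uncurry_multiplier hψt
  have hM (t x y : ℝ) :
      HasDerivAt (fun s => multiplier (ψ s) x y) (multiplier (pderiv₁ ψ t) x y) t := by
    have hx : HasDerivAt (fun s => pderiv₂ ψ s x y) (pderiv₂ (pderiv₁ ψ) t x y) t :=
      pderiv₁_pderiv₂ hψ t x y ▸ hasDerivAt_pderiv₁ (contDiff_pderiv₂ hψ (by norm_num)) t x y
    have hy : HasDerivAt (fun s => pderiv₃ ψ s x y) (pderiv₃ (pderiv₁ ψ) t x y) t :=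
      pderiv₁_pderiv₃ hψ t x y ▸ hasDerivAt_pderiv₁ (contDiff_pderiv₃ hψ (by norm_num)) t x y
    exact ((hx.const_mul x).fun_add (hy.const_mul y)).fun_add
      ((hasDerivAt_pderiv₁ hψ₁ t x y).const_mul (3 / 4))
  refine (hasDerivAt_integral₂ (F := fun s x y => η s x y * multiplier (ψ s) x y)
    (F' := fun s x y => pderiv₁ η s x y * multiplier (ψ s) x y +
      η s x y * multiplier (pderiv₁ ψ s) x y) (by fun_prop) (by fun_prop)
    (fun s x y => (hasDerivAt_pderiv₁ hη s x y).fun_mul (hM s x y)) 0 L₁ 0 L₂ t).congr_deriv ?_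
  have cMt : Continuous ↿(multiplier (ψ t)) := continuous_multiplier (by fun_prop)
  have cMt' : Continuous ↿(multiplier (pderiv₁ ψ t)) := continuous_multiplier (by fun_prop)
  exact integral₂_add (by fun_prop) (by fun_prop) _ _ _ _

theorem sq_multiplier_sub_le {L x y : ℝ} (hx : x ∈ Icc 0 L) (hy : y ∈ Icc 0 L)
    (u : ℝ → ℝ → ℝ) (m : ℝ) :
    (multiplier u x y - 3 / 4 * m) ^ 2 ≤
      5 / 2 * L ^ 2 * (pderivFst u x y ^ 2 + pderivSnd u x y ^ 2) + 45 / 16 * (u x y - m) ^ 2 := by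
  have cauchy_schwarz : (x * pderivFst u x y + y * pderivSnd u x y) ^ 2 ≤
      (x ^ 2 + y ^ 2) * (pderivFst u x y ^ 2 + pderivSnd u x y ^ 2) := by
    linarith [sq_nonneg (x * pderivSnd u x y - y * pderivFst u x y)]
  have dilation : (x ^ 2 + y ^ 2) * (pderivFst u x y ^ 2 + pderivSnd u x y ^ 2) ≤
      (L ^ 2 + L ^ 2) * (pderivFst u x y ^ 2 + pderivSnd u x y ^ 2) := by
    have := pow_le_pow_left₀ hx.1 hx.2 2
    have := pow_le_pow_left₀ hy.1 hy.2 2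
    gcongr
  have young := sq_nonneg
    (x * pderivFst u x y + y * pderivSnd u x y - 4 * (3 / 4 * (u x y - m)))
  simp only [multiplier]
  linarith

theorem sq_multiplierFunctional_le {e u : ℝ → ℝ → ℝ} {L₁ L₂ : ℝ} (hL₁ : 0 < L₁) (hL₂ : 0 < L₂)
    (he : Continuous ↿e) (hu : ContDiff ℝ 1 ↿u)
    (hmean : ∫ x in 0..L₁, ∫ y in 0..L₂, e x y = 0) :
    multiplierFunctional L₁ L₂ e u ^ 2 ≤ (7 / 4 * max L₁ L₂) ^ 2 *
      ((∫ x in 0..L₁, ∫ y in 0..L₂, e x y ^ 2) *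
        ∫ x in 0..L₁, ∫ y in 0..L₂, (pderivFst u x y ^ 2 + pderivSnd u x y ^ 2)) := by
  set L := max L₁ L₂
  set E := ∫ x in 0..L₁, ∫ y in 0..L₂, e x y ^ 2
  set S := ∫ x in 0..L₁, ∫ y in 0..L₂, (pderivFst u x y ^ 2 + pderivSnd u x y ^ 2)
  set m := ⨍ s in 0..L₁, ⨍ r in 0..L₂, u s r
  have hx : Continuous ↿(pderivFst u) := continuous_pderivFst hu
  have hy : Continuous ↿(pderivSnd u) := continuous_pderivSnd hu
  have hc : Continuous ↿u := hu.continuous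
  have hM : Continuous ↿(multiplier u) := continuous_multiplier hu
  have E_nonneg : 0 ≤ E := integral₂_nonneg hL₁.le hL₂.le fun _ _ _ _ => sq_nonneg _
  have S_nonneg : 0 ≤ S := integral₂_nonneg hL₁.le hL₂.le fun _ _ _ _ => by positivity
  have poincare : ∫ x in 0..L₁, ∫ y in 0..L₂, (u x y - m) ^ 2 ≤ L ^ 2 / 8 * S := by
    simpa only [sub_zero] using integral₂_sq_sub_average_le hL₁ hL₂ hu
  have shift : multiplierFunctional L₁ L₂ e u =
      ∫ x in 0..L₁, ∫ y in 0..L₂, e x y * (multiplier u x y - 3 / 4 * m) := by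
    simp only [mul_sub]
    rw [integral₂_sub (by fun_prop) (by fun_prop)]
    simp only [intervalIntegral.integral_mul_const, hmean, zero_mul, sub_zero]
    rfl
  calc multiplierFunctional L₁ L₂ e u ^ 2
      ≤ E * ∫ x in 0..L₁, ∫ y in 0..L₂, (multiplier u x y - 3 / 4 * m) ^ 2 :=
        shift ▸ integral₂_mul_sq_le hL₁.le hL₂.le he (by fun_prop)
    _ ≤ E * (5 / 2 * L ^ 2 * S + 45 / 16 * (L ^ 2 / 8 * S)) := by
        refine mul_le_mul_of_nonneg_left ?_ E_nonneg
        refine (integral₂_mono_on hL₁.le hL₂.le (by fun_prop) (by fun_prop)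
          fun x hx y hy => sq_multiplier_sub_le ⟨hx.1, hx.2.trans (le_max_left _ _)⟩
            ⟨hy.1, hy.2.trans (le_max_right _ _)⟩ u m).trans ?_
        rw [integral₂_add (by fun_prop) (by fun_prop)]
        simp only [intervalIntegral.integral_const_mul]
        gcongr
    _ = (5 / 2 + 45 / 128) * L ^ 2 * (E * S) := by ring
    _ ≤ (7 / 4) ^ 2 * L ^ 2 * (E * S) := by gcongr; norm_num
    _ = _ := by rw [mul_pow]

end Multiplier

/-! ### Water waves -/

section FreeSurface

variable {η : ℝ → ℝ → ℝ → ℝ} {ϕ : ℝ → ℝ → ℝ → ℝ → ℝ} {m n : WithTop ℕ∞}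

theorem hasDerivAt_comp_graph {f : ℝ → ℝ → ℝ} (hf : ContDiff ℝ 1 ↿f) {b : ℝ → ℝ} {b' s : ℝ}
    (hb : HasDerivAt b b' s) :
    HasDerivAt (fun r => f r (b r)) (pderivFst f s (b s) + pderivSnd f s (b s) * b') s := by
  have hd : Differentiable ℝ ↿f := hf.differentiable one_ne_zero
  have hx : pderivFst f s (b s) = fderiv ℝ ↿f (s, b s) (1, 0) :=
    (hasDerivAt_prodMk_left hd s (b s)).deriv
  have hy : pderivSnd f s (b s) = fderiv ℝ ↿f (s, b s) (0, 1) :=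
    (hasDerivAt_prodMk_right hd s (b s)).deriv
  refine ((hd (s, b s)).hasFDerivAt.comp_hasDerivAt s
    ((hasDerivAt_id s).prodMk hb)).congr_deriv ?_
  rw [hx, hy, mul_comm, ← smul_eq_mul, ← map_smul, ← map_add]
  simp

theorem contDiff_psi3 (hη : ContDiff ℝ n ↿η) (hϕ : ContDiff ℝ n ↿ϕ) :
    ContDiff ℝ n ↿(psi3 η ϕ) := by
  change ContDiff ℝ n ↿fun t x y => ϕ t x y (η t x y)
  fun_prop

theorem psi3T_eq (hη : ContDiff ℝ 1 ↿η) (hϕ : ContDiff ℝ 1 ↿ϕ) (t x y : ℝ) :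
    psi3T η ϕ t x y =
      phiT3 ϕ t x y (η t x y) + phiY3 ϕ t x y (η t x y) * etaT3 η t x y :=
  (hasDerivAt_comp_graph (f := fun s z => ϕ s x y z) (by fun_prop)
    (hasDerivAt_pderiv₁ hη t x y)).deriv

theorem psi3X1_eq (hη : ContDiff ℝ 1 ↿η) (hϕ : ContDiff ℝ 1 ↿ϕ) (t x y : ℝ) :
    psi3X1 η ϕ t x y =
      phiX1 ϕ t x y (η t x y) + phiY3 ϕ t x y (η t x y) * etaX1 η t x y :=
  (hasDerivAt_comp_graph (f := fun s z => ϕ t s y z) (by fun_prop)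
    (hasDerivAt_pderiv₂ hη t x y)).deriv

theorem psi3X2_eq (hη : ContDiff ℝ 1 ↿η) (hϕ : ContDiff ℝ 1 ↿ϕ) (t x y : ℝ) :
    psi3X2 η ϕ t x y =
      phiX2 ϕ t x y (η t x y) + phiY3 ϕ t x y (η t x y) * etaX2 η t x y :=
  (hasDerivAt_comp_graph (f := fun s z => ϕ t x s z) (by fun_prop)
    (hasDerivAt_pderiv₃ hη t x y)).deriv

theorem contDiff_phiT3 (hϕ : ContDiff ℝ n ↿ϕ) (hmn : m + 1 ≤ n) : ContDiff ℝ m ↿(phiT3 ϕ) :=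
  contDiff_deriv_of_uncurry (f := fun (p : ℝ × ℝ × ℝ × ℝ) s => ϕ s p.2.1 p.2.2.1 p.2.2.2)
    (by fun_prop) contDiff_fst hmn

theorem contDiff_phiX1 (hϕ : ContDiff ℝ n ↿ϕ) (hmn : m + 1 ≤ n) : ContDiff ℝ m ↿(phiX1 ϕ) :=
  contDiff_deriv_of_uncurry (f := fun (p : ℝ × ℝ × ℝ × ℝ) s => ϕ p.1 s p.2.2.1 p.2.2.2)
    (by fun_prop) contDiff_snd.fst hmn

theorem contDiff_phiX2 (hϕ : ContDiff ℝ n ↿ϕ) (hmn : m + 1 ≤ n) : ContDiff ℝ m ↿(phiX2 ϕ) :=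
  contDiff_deriv_of_uncurry (f := fun (p : ℝ × ℝ × ℝ × ℝ) s => ϕ p.1 p.2.1 s p.2.2.2)
    (by fun_prop) contDiff_snd.snd.fst hmn

theorem contDiff_phiY3 (hϕ : ContDiff ℝ n ↿ϕ) (hmn : m + 1 ≤ n) : ContDiff ℝ m ↿(phiY3 ϕ) :=
  contDiff_deriv_of_uncurry (f := fun (p : ℝ × ℝ × ℝ × ℝ) s => ϕ p.1 p.2.1 p.2.2.1 s)
    (by fun_prop) contDiff_snd.snd.snd hmn

theorem contDiff_gradSq3 (hϕ : ContDiff ℝ 2 ↿ϕ) : ContDiff ℝ 1 ↿(gradSq3 ϕ) := by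
  have h₁ : ContDiff ℝ 1 ↿(phiX1 ϕ) := contDiff_phiX1 hϕ (by norm_num)
  have h₂ : ContDiff ℝ 1 ↿(phiX2 ϕ) := contDiff_phiX2 hϕ (by norm_num)
  have h₃ : ContDiff ℝ 1 ↿(phiY3 ϕ) := contDiff_phiY3 hϕ (by norm_num)
  change ContDiff ℝ 1
    ↿fun t x y z => phiX1 ϕ t x y z ^ 2 + phiX2 ϕ t x y z ^ 2 + phiY3 ϕ t x y z ^ 2
  fun_prop

theorem hasDerivAt_gradSq3 (hϕ : ContDiff ℝ 2 ↿ϕ) (t x y z : ℝ) :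
    HasDerivAt (fun s => gradSq3 ϕ s x y z) (2 * gradInner (phiT3 ϕ t) (ϕ t) x y z) t := by
  have h₁ : ContDiff ℝ 1 ↿(phiX1 ϕ) := contDiff_phiX1 hϕ (by norm_num)
  have h₂ : ContDiff ℝ 1 ↿(phiX2 ϕ) := contDiff_phiX2 hϕ (by norm_num)
  have h₃ : ContDiff ℝ 1 ↿(phiY3 ϕ) := contDiff_phiY3 hϕ (by norm_num)
  have hx : HasDerivAt (fun s => phiX1 ϕ s x y z) (pderiv₁ (phiT3 ϕ t) x y z) t :=
    (hasDerivAt_pderivFst (f := fun s r => phiX1 ϕ s r y z) (by fun_prop) t x).congr_deriv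
      (deriv_deriv_comm (F := fun p => ϕ p.1 p.2 y z) (by fun_prop) t x)
  have hy : HasDerivAt (fun s => phiX2 ϕ s x y z) (pderiv₂ (phiT3 ϕ t) x y z) t :=
    (hasDerivAt_pderivFst (f := fun s r => phiX2 ϕ s x r z) (by fun_prop) t y).congr_deriv
      (deriv_deriv_comm (F := fun p => ϕ p.1 x p.2 z) (by fun_prop) t y)
  have hz : HasDerivAt (fun s => phiY3 ϕ s x y z) (pderiv₃ (phiT3 ϕ t) x y z) t :=
    (hasDerivAt_pderivFst (f := fun s r => phiY3 ϕ s x y r) (by fun_prop) t z).congr_deriv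
      (deriv_deriv_comm (F := fun p => ϕ p.1 x y p.2) (by fun_prop) t z)
  refine (((hx.fun_pow 2).fun_add (hy.fun_pow 2)).fun_add (hz.fun_pow 2)).congr_deriv ?_
  change _ = 2 * (pderiv₁ (phiT3 ϕ t) x y z * phiX1 ϕ t x y z +
    pderiv₂ (phiT3 ϕ t) x y z * phiX2 ϕ t x y z + pderiv₃ (phiT3 ϕ t) x y z * phiY3 ϕ t x y z)
  push_cast
  ring

theorem hasDerivAt_integral_gradSq3 (hη : ContDiff ℝ 1 ↿η) (hϕ : ContDiff ℝ 2 ↿ϕ)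
    (a b c d z₀ t : ℝ) :
    HasDerivAt (fun s => ∫ x in a..b, ∫ y in c..d, ∫ z in z₀..η s x y, gradSq3 ϕ s x y z)
      (2 * (∫ x in a..b, ∫ y in c..d, ∫ z in z₀..η t x y, gradInner (phiT3 ϕ t) (ϕ t) x y z) +
        ∫ x in a..b, ∫ y in c..d, gradSq3 ϕ t x y (η t x y) * etaT3 η t x y) t := by
  have hS : ContDiff ℝ 1 ↿(gradSq3 ϕ) := contDiff_gradSq3 hϕ
  have cS' : Continuous ↿(phiT3 (gradSq3 ϕ)) :=
    (contDiff_phiT3 (m := 0) hS (by simp)).continuous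
  have cη' : Continuous ↿(etaT3 η) := continuous_pderiv₁ hη
  have S_eq (x y z : ℝ) : phiT3 (gradSq3 ϕ) t x y z = 2 * gradInner (phiT3 ϕ t) (ϕ t) x y z :=
    (hasDerivAt_gradSq3 hϕ t x y z).deriv
  refine (hasDerivAt_integral₂ (F := fun s x y => ∫ z in z₀..η s x y, gradSq3 ϕ s x y z)
    (F' := fun s x y => (∫ z in z₀..η s x y, phiT3 (gradSq3 ϕ) s x y z) +
      gradSq3 ϕ s x y (η s x y) * etaT3 η s x y) (by fun_prop) (by fun_prop)
    (fun s x y => hasDerivAt_integral_of_contDiff (f := fun r z => gradSq3 ϕ r x y z)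
      (by fun_prop) (hasDerivAt_pderiv₁ hη s x y) z₀) a b c d t).congr_deriv ?_
  rw [integral₂_add (by fun_prop) (by fun_prop)]
  simp only [S_eq, intervalIntegral.integral_const_mul]

end FreeSurface

namespace IsWW3D

variable {L₁ L₂ h g T t : ℝ} {η : ℝ → ℝ → ℝ → ℝ} {ϕ : ℝ → ℝ → ℝ → ℝ → ℝ}

theorem contDiff_eta (hsol : IsWW3D L₁ L₂ h g T η ϕ) : ContDiff ℝ 2 ↿η :=
  contDiff_infty.1 hsol.smooth_eta 2

theorem contDiff_phi (hsol : IsWW3D L₁ L₂ h g T η ϕ) : ContDiff ℝ 2 ↿ϕ :=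
  contDiff_infty.1 hsol.smooth_phi 2

theorem isTankPotential (hsol : IsWW3D L₁ L₂ h g T η ϕ) (hL₁ : 0 ≤ L₁) (hL₂ : 0 ≤ L₂)
    (hh : 0 ≤ h) (ht : t ∈ Icc 0 T) : IsTankPotential L₁ L₂ h (η t) (ϕ t) where
  width_nonneg := hL₁
  length_nonneg := hL₂
  contDiff_surface := by
    have := hsol.contDiff_eta.of_le one_le_two
    fun_prop
  contDiff_potential := by
    have := hsol.contDiff_phi
    fun_prop
  bottom_le x hx y hy := by linarith [hsol.eta_lower t ht x hx y hy]
  laplace := hsol.laplace t ht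
  wall₁ := hsol.bc_x1 t ht
  wall₂ := hsol.bc_x2 t ht
  bottom := hsol.bc_bottom t ht

theorem integral_mul_etaT3 (hsol : IsWW3D L₁ L₂ h g T η ϕ) (hL₁ : 0 ≤ L₁) (hL₂ : 0 ≤ L₂)
    (hh : 0 ≤ h) (ht : t ∈ Icc 0 T) {F : ℝ → ℝ → ℝ → ℝ} (hF : ContDiff ℝ 1 ↿F) :
    ∫ x in 0..L₁, ∫ y in 0..L₂, F x y (η t x y) * etaT3 η t x y =
      ∫ x in 0..L₁, ∫ y in 0..L₂, ∫ z in -h..η t x y, gradInner F (ϕ t) x y z := by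
  rw [← (hsol.isTankPotential hL₁ hL₂ hh ht).integral_mul_normalVelocity hF]
  exact integral₂_congr_on hL₁ hL₂ fun x hx y hy => by
    rw [hsol.kinematic t ht x hx y hy]
    rfl

theorem integral_psi3_mul_etaT3 (hsol : IsWW3D L₁ L₂ h g T η ϕ) (hL₁ : 0 ≤ L₁) (hL₂ : 0 ≤ L₂)
    (hh : 0 ≤ h) (ht : t ∈ Icc 0 T) :
    ∫ x in 0..L₁, ∫ y in 0..L₂, psi3 η ϕ t x y * etaT3 η t x y =
      ∫ x in 0..L₁, ∫ y in 0..L₂, ∫ z in -h..η t x y, gradSq3 ϕ t x y z := by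
  have hϕ : ContDiff ℝ 1 ↿ϕ := hsol.contDiff_phi.of_le one_le_two
  refine (hsol.integral_mul_etaT3 hL₁ hL₂ hh ht (F := ϕ t) (by fun_prop)).trans ?_
  simp only [gradInner, ← pow_two]
  rfl

theorem hasDerivAt_energy3D (hsol : IsWW3D L₁ L₂ h g T η ϕ) (hL₁ : 0 ≤ L₁) (hL₂ : 0 ≤ L₂)
    (hh : 0 ≤ h) (ht : t ∈ Icc 0 T) : HasDerivAt (energy3D L₁ L₂ h g η ϕ) 0 t := by
  have hη : ContDiff ℝ 1 ↿η := hsol.contDiff_eta.of_le one_le_two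
  have hϕT : ContDiff ℝ 1 ↿(phiT3 ϕ) := contDiff_phiT3 hsol.contDiff_phi (by norm_num)
  have cη' : Continuous ↿(etaT3 η) := continuous_pderiv₁ hη
  have potential := hasDerivAt_integral₂ (F := fun s x y => η s x y ^ 2)
    (F' := fun s x y => 2 * (η s x y * etaT3 η s x y)) (by fun_prop) (by fun_prop)
    (fun s x y => ((hasDerivAt_pderiv₁ hη s x y).fun_pow 2).congr_deriv (by
      simp only [etaT3, pderiv₁]; push_cast; ring)) 0 L₁ 0 L₂ t
  have kinetic := hasDerivAt_integral_gradSq3 hη hsol.contDiff_phi 0 L₁ 0 L₂ (-h) t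
  rw [← hsol.integral_mul_etaT3 hL₁ hL₂ hh ht (F := phiT3 ϕ t) (by fun_prop)] at kinetic
  have bernoulli : ∫ x in 0..L₁, ∫ y in 0..L₂, gradSq3 ϕ t x y (η t x y) * etaT3 η t x y =
      ∫ x in 0..L₁, ∫ y in 0..L₂, (-2 * (phiT3 ϕ t x y (η t x y) * etaT3 η t x y) -
        g * (2 * (η t x y * etaT3 η t x y))) :=
    integral₂_congr_on hL₁ hL₂ fun x hx y hy => by
      simp only [gradSq3]
      linear_combination 2 * etaT3 η t x y * hsol.bernoulli t ht x hx y hy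
  rw [bernoulli, integral₂_sub (by fun_prop) (by fun_prop)] at kinetic
  refine ((potential.const_mul (g / 2)).add (kinetic.const_mul (1 / 2))).congr_deriv ?_
  simp only [intervalIntegral.integral_const_mul]
  ring

theorem energy3D_eq (hsol : IsWW3D L₁ L₂ h g T η ϕ) (hL₁ : 0 ≤ L₁) (hL₂ : 0 ≤ L₂) (hh : 0 ≤ h)
    (ht : t ∈ Icc 0 T) : energy3D L₁ L₂ h g η ϕ t = energy3D L₁ L₂ h g η ϕ 0 :=
  constant_of_has_deriv_right_zero
    (fun _ hs => (hsol.hasDerivAt_energy3D hL₁ hL₂ hh hs).continuousAt.continuousWithinAt)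
    (fun _ hs =>
      (hsol.hasDerivAt_energy3D hL₁ hL₂ hh (Ico_subset_Icc_self hs)).hasDerivWithinAt) t ht

theorem mul_integral_eta_sq_le (hsol : IsWW3D L₁ L₂ h g T η ϕ) (hL₁ : 0 ≤ L₁) (hL₂ : 0 ≤ L₂)
    (hh : 0 ≤ h) (ht : t ∈ Icc 0 T) :
    g * ∫ x in 0..L₁, ∫ y in 0..L₂, η t x y ^ 2 ≤ 2 * energy3D L₁ L₂ h g η ϕ 0 := by
  rw [← hsol.energy3D_eq hL₁ hL₂ hh ht, energy3D]
  have kinetic : 0 ≤ ∫ x in 0..L₁, ∫ y in 0..L₂, ∫ z in -h..η t x y, gradSq3 ϕ t x y z :=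
    (hsol.isTankPotential hL₁ hL₂ hh ht).integral_gradSq_nonneg
  linarith

theorem energy3D_nonneg (hsol : IsWW3D L₁ L₂ h g T η ϕ) (hL₁ : 0 ≤ L₁) (hL₂ : 0 ≤ L₂)
    (hh : 0 ≤ h) (hg : 0 ≤ g) (hT : 0 ≤ T) : 0 ≤ energy3D L₁ L₂ h g η ϕ 0 := by
  have potential : 0 ≤ g * ∫ x in 0..L₁, ∫ y in 0..L₂, η 0 x y ^ 2 :=
    mul_nonneg hg (integral₂_nonneg hL₁ hL₂ fun _ _ _ _ => sq_nonneg _)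
  linarith [hsol.mul_integral_eta_sq_le hL₁ hL₂ hh (left_mem_Icc.2 hT)]

theorem virial_density_eq (hsol : IsWW3D L₁ L₂ h g T η ϕ) (ht : t ∈ Icc 0 T) {x y : ℝ}
    (hx : x ∈ Icc 0 L₁) (hy : y ∈ Icc 0 L₂) :
    etaT3 η t x y * multiplier (psi3 η ϕ t) x y - 5 / 4 * η t x y * psi3T η ϕ t x y -
        g * η t x y ^ 2 - (x * pderivFst (η t) x y + y * pderivSnd (η t) x y) *
          (psi3T η ϕ t x y + g * η t x y) =
      g / 4 * η t x y ^ 2 + 3 / 4 * (psi3 η ϕ t x y * etaT3 η t x y) +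
        pohozaevSurfaceDensity (9 / 4) (η t) (ϕ t) x y := by
  have hη : ContDiff ℝ 1 ↿η := hsol.contDiff_eta.of_le one_le_two
  have hϕ : ContDiff ℝ 1 ↿ϕ := hsol.contDiff_phi.of_le one_le_two
  have ψ_x : pderivFst (psi3 η ϕ t) x y = pderiv₁ (ϕ t) x y (η t x y) +
    pderiv₃ (ϕ t) x y (η t x y) * pderivFst (η t) x y := psi3X1_eq hη hϕ t x y
  have ψ_y : pderivSnd (psi3 η ϕ t) x y = pderiv₂ (ϕ t) x y (η t x y) +
    pderiv₃ (ϕ t) x y (η t x y) * pderivSnd (η t) x y := psi3X2_eq hη hϕ t x y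
  have ψ_t : psi3T η ϕ t x y = phiT3 ϕ t x y (η t x y) +
    pderiv₃ (ϕ t) x y (η t x y) * etaT3 η t x y := psi3T_eq hη hϕ t x y
  have kinematic : normalVelocity (η t) (ϕ t) x y = etaT3 η t x y :=
    (hsol.kinematic t ht x hx y hy).symm
  have bernoulli : phiT3 ϕ t x y (η t x y) + 1 / 2 * gradSq (ϕ t) x y (η t x y) +
    g * η t x y = 0 := hsol.bernoulli t ht x hx y hy
  rw [multiplier, ψ_x, ψ_y, ψ_t, pohozaevSurfaceDensity, kinematic]
  linear_combination (-(5 / 4) * η t x y -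
    (x * pderivFst (η t) x y + y * pderivSnd (η t) x y)) * bernoulli

theorem virial_identity (hsol : IsWW3D L₁ L₂ h g T η ϕ) (hL₁ : 0 ≤ L₁) (hL₂ : 0 ≤ L₂)
    (hh : 0 ≤ h) (ht : t ∈ Icc 0 T) :
    boundaryFlux L₁ L₂ (Theta3 g η ϕ t) + (multiplierFunctional L₁ L₂ (etaT3 η t) (psi3 η ϕ t) +
        multiplierFunctional L₁ L₂ (η t) (psi3T η ϕ t)) =
      g / 4 * (∫ x in 0..L₁, ∫ y in 0..L₂, η t x y ^ 2) +
        3 / 4 * (∫ x in 0..L₁, ∫ y in 0..L₂, ∫ z in -h..η t x y, gradSq3 ϕ t x y z) +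
        pohozaevSurface L₁ L₂ (9 / 4) (η t) (ϕ t) := by
  have hφ := hsol.isTankPotential hL₁ hL₂ hh ht
  have hη : ContDiff ℝ 1 ↿η := hsol.contDiff_eta.of_le one_le_two
  have hψ : ContDiff ℝ 2 ↿(psi3 η ϕ) := contDiff_psi3 hsol.contDiff_eta hsol.contDiff_phi
  have hψ₁ : ContDiff ℝ 1 ↿(psi3 η ϕ) := hψ.of_le one_le_two
  have hψt : ContDiff ℝ 1 ↿(psi3T η ϕ) := contDiff_pderiv₁ hψ (by norm_num)
  have cη' : Continuous ↿(etaT3 η) := continuous_pderiv₁ hη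
  have cP : Continuous ↿(pohozaevSurfaceDensity (9 / 4) (η t) (ϕ t)) :=
    continuous_pohozaevSurfaceDensity hφ.contDiff_surface hφ.contDiff_potential _
  calc _ = _ := boundaryFlux_add_multiplierFunctional (by fun_prop) (by fun_prop) (by fun_prop)
        (by fun_prop) g L₁ L₂
    _ = ∫ x in 0..L₁, ∫ y in 0..L₂, (g / 4 * η t x y ^ 2 +
          3 / 4 * (psi3 η ϕ t x y * etaT3 η t x y) +
            pohozaevSurfaceDensity (9 / 4) (η t) (ϕ t) x y) :=
      integral₂_congr_on hL₁ hL₂ fun x hx y hy => hsol.virial_density_eq ht hx hy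
    _ = _ := by
      rw [integral₂_add (by fun_prop) (by fun_prop), integral₂_add (by fun_prop) (by fun_prop),
        ← hsol.integral_psi3_mul_etaT3 hL₁ hL₂ hh ht]
      simp only [intervalIntegral.integral_const_mul]
      rfl

theorem energy_le_virial {B : ℝ} (hsol : IsWW3D L₁ L₂ h g T η ϕ) (hL₁ : 0 ≤ L₁) (hL₂ : 0 ≤ L₂)
    (hh : 0 ≤ h) (hg : 0 ≤ g) (hB : 0 ≤ B) (ht : t ∈ Icc 0 T)
    (hdepth : ∀ x ∈ Icc 0 L₁, ∀ y ∈ Icc 0 L₂, 0 ≤ h + 9 / 4 * η t x y)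
    (hslope : ∀ x ∈ Icc 0 L₁, ∀ y ∈ Icc 0 L₂, etaX1 η t x y ^ 2 + etaX2 η t x y ^ 2 ≤ B ^ 2) :
    (2 - 9 * B) / 4 * energy3D L₁ L₂ h g η ϕ 0 ≤
      boundaryFlux L₁ L₂ (Theta3 g η ϕ t) + (multiplierFunctional L₁ L₂ (etaT3 η t) (psi3 η ϕ t) +
        multiplierFunctional L₁ L₂ (η t) (psi3T η ϕ t)) := by
  have hφ := hsol.isTankPotential hL₁ hL₂ hh ht
  have pohozaev : -((1 + 9 / 4 * B) / 2) * (∫ x in 0..L₁, ∫ y in 0..L₂, ∫ z in -h..η t x y,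
      gradSq3 ϕ t x y z) ≤ pohozaevSurface L₁ L₂ (9 / 4) (η t) (ϕ t) :=
    hφ.pohozaev_le (by norm_num) hB hdepth hslope
  have potential_nonneg : 0 ≤ B * g * ∫ x in 0..L₁, ∫ y in 0..L₂, η t x y ^ 2 :=
    mul_nonneg (mul_nonneg hB hg) (integral₂_nonneg hL₁ hL₂ fun _ _ _ _ => sq_nonneg _)
  rw [hsol.virial_identity hL₁ hL₂ hh ht, ← hsol.energy3D_eq hL₁ hL₂ hh ht, energy3D]
  linarith

theorem energy_mul_le_bigB_add {B : ℝ} (hsol : IsWW3D L₁ L₂ h g T η ϕ) (hL₁ : 0 ≤ L₁)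
    (hL₂ : 0 ≤ L₂) (hh : 0 ≤ h) (hg : 0 ≤ g) (hT : 0 ≤ T) (hB : 0 ≤ B)
    (hdepth : ∀ t ∈ Icc 0 T, ∀ x ∈ Icc 0 L₁, ∀ y ∈ Icc 0 L₂, 0 ≤ h + 9 / 4 * η t x y)
    (hslope : ∀ t ∈ Icc 0 T, ∀ x ∈ Icc 0 L₁, ∀ y ∈ Icc 0 L₂,
      etaX1 η t x y ^ 2 + etaX2 η t x y ^ 2 ≤ B ^ 2) :
    (2 - 9 * B) / 4 * energy3D L₁ L₂ h g η ϕ 0 * T ≤ bigB L₁ L₂ g T η ϕ +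
      (multiplierFunctional L₁ L₂ (η T) (psi3 η ϕ T) -
        multiplierFunctional L₁ L₂ (η 0) (psi3 η ϕ 0)) := by
  have hη : ContDiff ℝ 1 ↿η := hsol.contDiff_eta.of_le one_le_two
  have hψ : ContDiff ℝ 2 ↿(psi3 η ϕ) := contDiff_psi3 hsol.contDiff_eta hsol.contDiff_phi
  have hψ₁ : ContDiff ℝ 1 ↿(psi3 η ϕ) := hψ.of_le one_le_two
  have hψt : ContDiff ℝ 1 ↿(psi3T η ϕ) := contDiff_pderiv₁ hψ (by norm_num)
  have cη' : Continuous ↿(etaT3 η) := continuous_pderiv₁ hη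
  have c_flux : Continuous fun t => boundaryFlux L₁ L₂ (Theta3 g η ϕ t) := by
    unfold boundaryFlux Theta3
    fun_prop
  have c_deriv : Continuous fun t => multiplierFunctional L₁ L₂ (etaT3 η t) (psi3 η ϕ t) +
      multiplierFunctional L₁ L₂ (η t) (psi3T η ϕ t) :=
    (continuous_multiplierFunctional cη' hψ₁ L₁ L₂).add
      (continuous_multiplierFunctional hη.continuous hψt L₁ L₂)
  have increment : ∫ t in 0..T, (multiplierFunctional L₁ L₂ (etaT3 η t) (psi3 η ϕ t) +
        multiplierFunctional L₁ L₂ (η t) (psi3T η ϕ t)) =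
      multiplierFunctional L₁ L₂ (η T) (psi3 η ϕ T) -
        multiplierFunctional L₁ L₂ (η 0) (psi3 η ϕ 0) :=
    intervalIntegral.integral_eq_sub_of_hasDerivAt
      (fun t _ => hasDerivAt_multiplierFunctional hη hψ L₁ L₂ t) (c_deriv.intervalIntegrable _ _)
  have rate := intervalIntegral.integral_mono_on (μ := volume) hT
    (continuous_const.intervalIntegrable _ _) (Continuous.intervalIntegrable (by fun_prop) _ _)
    fun t ht => hsol.energy_le_virial hL₁ hL₂ hh hg hB ht (hdepth t ht) (hslope t ht)
  rw [intervalIntegral.integral_add (c_flux.intervalIntegrable _ _)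
      (c_deriv.intervalIntegrable _ _), intervalIntegral.integral_const, sub_zero, smul_eq_mul,
    mul_comm, increment] at rate
  exact rate

theorem abs_multiplierFunctional_le {A : ℝ} (hsol : IsWW3D L₁ L₂ h g T η ϕ) (hL₁ : 0 < L₁)
    (hL₂ : 0 < L₂) (hh : 0 ≤ h) (hg : 0 < g) (hA : 0 ≤ A) (ht : t ∈ Icc 0 T)
    (hψ : √(∫ x in 0..L₁, ∫ y in 0..L₂, (psi3X1 η ϕ t x y ^ 2 + psi3X2 η ϕ t x y ^ 2)) ≤
      A * √(2 * energy3D L₁ L₂ h g η ϕ 0)) :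
    |multiplierFunctional L₁ L₂ (η t) (psi3 η ϕ t)| ≤
      7 / 2 * max L₁ L₂ * A / √g * energy3D L₁ L₂ h g η ϕ 0 := by
  set H := energy3D L₁ L₂ h g η ϕ 0
  have H_nonneg : 0 ≤ H := hsol.energy3D_nonneg hL₁.le hL₂.le hh hg.le (ht.1.trans ht.2)
  have cη : Continuous ↿η := hsol.contDiff_eta.continuous
  have hψ₁ : ContDiff ℝ 1 ↿(psi3 η ϕ) :=
    (contDiff_psi3 hsol.contDiff_eta hsol.contDiff_phi).of_le one_le_two
  have elevation : ∫ x in 0..L₁, ∫ y in 0..L₂, η t x y ^ 2 ≤ 2 * H / g := by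
    rw [le_div_iff₀' hg]
    exact hsol.mul_integral_eta_sq_le hL₁.le hL₂.le hh ht
  have trace : ∫ x in 0..L₁, ∫ y in 0..L₂, (pderivFst (psi3 η ϕ t) x y ^ 2 +
      pderivSnd (psi3 η ϕ t) x y ^ 2) ≤ A ^ 2 * (2 * H) := by
    rw [← Real.sq_sqrt (show 0 ≤ 2 * H by positivity), ← mul_pow]
    exact (Real.sqrt_le_left (by positivity)).1 hψ
  refine abs_le_of_sq_le_sq ?_ (by positivity)
  calc multiplierFunctional L₁ L₂ (η t) (psi3 η ϕ t) ^ 2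
      ≤ (7 / 4 * max L₁ L₂) ^ 2 * (2 * H / g * (A ^ 2 * (2 * H))) := by
        refine (sq_multiplierFunctional_le hL₁ hL₂ (by fun_prop) (by fun_prop)
          (hsol.eta_mean t ht)).trans ?_
        have := integral₂_nonneg hL₁.le hL₂.le (f := fun x y => pderivFst (psi3 η ϕ t) x y ^ 2 +
          pderivSnd (psi3 η ϕ t) x y ^ 2) fun _ _ _ _ => by positivity
        gcongr
    _ = (7 / 2 * max L₁ L₂ * A / √g * H) ^ 2 := by
        rw [mul_pow _ H, div_pow, Real.sq_sqrt hg.le]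
        ring

end IsWW3D

/-- Corollary 4.2 (`d = 2`): observability estimate `𝓑(T) ≥ 𝓗`
under the assumptions `η ≥ -4h/9`, `B < 2/9`, a lower bound on `T`, and the
bounds `‖∇η‖_{L^∞} ≤ B`, `‖∇ψ‖_{L²} ≤ A√(2𝓗)`. -/
theorem observability_3d
    (L₁ L₂ h g T : ℝ) (hL₁ : 0 < L₁) (hL₂ : 0 < L₂) (hh : 0 < h) (hg : 0 < g) (hT0 : 0 < T)
    (η : ℝ → ℝ → ℝ → ℝ) (ϕ : ℝ → ℝ → ℝ → ℝ → ℝ)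
    (hsol : IsWW3D L₁ L₂ h g T η ϕ)
    (heta : ∀ t ∈ Icc (0:ℝ) T, ∀ x₁ ∈ Icc (0:ℝ) L₁, ∀ x₂ ∈ Icc (0:ℝ) L₂,
      -(4 * h / 9) ≤ η t x₁ x₂)
    (A B : ℝ) (hA : 0 < A) (hB : 0 < B) (hB9 : B < 2 / 9)
    (hT : T ≥ 4 / (2 - 9 * B) * (1 + 7 * max L₁ L₂ * A / Real.sqrt g))
    (hslope : ∀ t ∈ Icc (0:ℝ) T, ∀ x₁ ∈ Icc (0:ℝ) L₁, ∀ x₂ ∈ Icc (0:ℝ) L₂,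
      Real.sqrt ((etaX1 η t x₁ x₂) ^ 2 + (etaX2 η t x₁ x₂) ^ 2) ≤ B)
    (hpsiL2 : ∀ t ∈ Icc (0:ℝ) T,
      Real.sqrt (∫ x₁ in (0:ℝ)..L₁, ∫ x₂ in (0:ℝ)..L₂,
          ((psi3X1 η ϕ t x₁ x₂) ^ 2 + (psi3X2 η ϕ t x₁ x₂) ^ 2))
        ≤ A * Real.sqrt (2 * energy3D L₁ L₂ h g η ϕ 0)) :
    bigB L₁ L₂ g T η ϕ ≥ energy3D L₁ L₂ h g η ϕ 0 := by
  have H_nonneg := hsol.energy3D_nonneg hL₁.le hL₂.le hh.le hg.le hT0.le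
  have integrated := hsol.energy_mul_le_bigB_add hL₁.le hL₂.le hh.le hg.le hT0.le hB.le
    (fun t ht x hx y hy => by linarith [heta t ht x hx y hy])
    (fun t ht x hx y hy => (Real.sqrt_le_left hB.le).1 (hslope t ht x hx y hy))
  have final := abs_le.1 <| hsol.abs_multiplierFunctional_le hL₁ hL₂ hh.le hg hA.le
    (right_mem_Icc.2 hT0.le) (hpsiL2 T (right_mem_Icc.2 hT0.le))
  have initial := abs_le.1 <| hsol.abs_multiplierFunctional_le hL₁ hL₂ hh.le hg hA.le
    (left_mem_Icc.2 hT0.le) (hpsiL2 0 (left_mem_Icc.2 hT0.le))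
  have time : 1 + 7 * max L₁ L₂ * A / √g ≤ (2 - 9 * B) / 4 * T := by
    rw [ge_iff_le, ← inv_div, inv_mul_le_iff₀ (by linarith)] at hT
    exact hT
  have scaled := mul_le_mul_of_nonneg_right time H_nonneg
  linear_combination scaled + integrated + initial.1 + final.2
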